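/- arXiv:2502.00141 — 3 statements merged into one kernel-verified Lean document; each statement's English description precedes it below -/
import Mathlib

section
/- The ideal class group of the ring of integers of K = ℚ(√−17) is a cyclic group of order 4. -/
open NumberField

/-!
By Minkowski's bound every ideal class of `ℤ[√-17]` contains an ideal of norm at most `5`. Up to a
principal factor such an ideal is `(n, c + √-17)` with `n ≤ 5` and `n ∣ c ^ 2 + 17`, which forces
`n ∈ {1, 2, 3}`. Put `𝔮 = (3, 1 + √-17)`. The relations `(2, 1 + √-17) 𝔮² = (1 + √-17)`,
`𝔮 · 𝔮̄ = (3)` and `𝔮⁴ = (8 - √-17)` express every class as a power of that of `𝔮`, whose order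
therefore divides `4`. It is not `1` or `2`: the norm of a generator of `𝔮² = (9, 1 + √-17)` would
divide both `81` and `18`, hence be less than `17`, so the generator would be a rational integer
dividing `1 + √-17`, that is, a unit.
-/

section SpanPair

open Ideal

variable {R : Type*} [CommRing R] {a b x y : R}

theorem span_pair_mul_span_pair_of_dvd {p q r : R} (h : a * b ∣ x * (p * a + q * b + r * x - 1)) :
    span {a, x} * span {b, x} = span {a * b, x} := by
  obtain ⟨w, hw⟩ := h
  rw [span_pair_mul_span_pair]
  apply le_antisymm <;> rw [span_le]
  · rintro _ (rfl | rfl | rfl | rfl) <;> rw [SetLike.mem_coe, mem_span_pair]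
    exacts [⟨1, 0, by ring⟩, ⟨0, a, by ring⟩, ⟨0, b, by ring⟩, ⟨0, x, by ring⟩]
  · rw [Set.pair_subset_iff]
    refine ⟨subset_span (by simp), ?_⟩
    have hx : p * (a * x) + q * (x * b) + r * (x * x) - w * (a * b) ∈
        span {a * b, a * x, x * b, x * x} := by
      refine sub_mem (add_mem (add_mem ?_ ?_) ?_) ?_ <;>
        exact mul_mem_left _ _ (subset_span (by simp))
    rw [SetLike.mem_coe]
    convert hx using 2
    linear_combination -hw

theorem span_pair_mul_span_pair_of_isCoprime (h : IsCoprime a b) :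
    span {a, x} * span {b, x} = span {a * b, x} := by
  obtain ⟨u, v, huv⟩ := h
  exact span_pair_mul_span_pair_of_dvd (p := u) (q := v) (r := 0) (by simp [huv])

-- The product contains `x * x + x * y = x * (x + y)`, and `x + y` is invertible modulo `a`.
theorem span_pair_mul_span_pair_of_isCoprime_add (h : IsCoprime a (x + y)) (hab : a * b ∣ x * y) :
    span {a, x} * span {b, x} = span {a * b, x} := by
  obtain ⟨u, v, huv⟩ := h
  refine span_pair_mul_span_pair_of_dvd (p := u) (q := 0) (r := v) ?_
  rw [show x * (u * a + 0 * b + v * x - 1) = -v * (x * y) by linear_combination x * huv]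
  exact hab.mul_left _

theorem span_pair_pow_of_isCoprime_add (h : IsCoprime a (x + y)) {n : ℕ} (hn : a ^ n ∣ x * y) :
    span {a, x} ^ n = span {a ^ n, x} := by
  induction n with
  | zero => simp [span_pair_eq_span_left_iff_dvd.2 (one_dvd x)]
  | succ n ih =>
    rw [pow_succ', ih ((pow_dvd_pow a n.le_succ).trans hn), pow_succ',
      span_pair_mul_span_pair_of_isCoprime_add h (pow_succ' a n ▸ hn)]

theorem span_pair_mul_span_pair_conj (h : IsCoprime a (x + y)) (ha : a ∣ x * y) :
    span {a, x} * span {a, y} = span {a} := by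
  obtain ⟨u, v, huv⟩ := h
  rw [span_pair_mul_span_pair]
  apply le_antisymm <;> rw [span_le]
  · rintro _ (rfl | rfl | rfl | rfl) <;> rw [SetLike.mem_coe, mem_span_singleton]
    exacts [dvd_mul_right a a, dvd_mul_right a y, dvd_mul_left a x, ha]
  · have ha' : u * (a * a) + v * (a * y) + v * (x * a) ∈ span {a * a, a * y, x * a, x * y} := by
      refine add_mem (add_mem ?_ ?_) ?_ <;> exact mul_mem_left _ _ (subset_span (by simp))
    rw [Set.singleton_subset_iff, SetLike.mem_coe]
    convert ha' using 2
    linear_combination -a * huv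

theorem span_pair_ne_top (h : a ∣ x * y) (hy : ¬ a ∣ y) : span {a, x} ≠ ⊤ := by
  rw [Ne, eq_top_iff_one, mem_span_pair]
  rintro ⟨u, v, huv⟩
  refine hy ?_
  rw [show y = a * (u * y) + v * (x * y) by linear_combination -y * huv]
  exact (dvd_mul_right _ _).add (h.mul_left v)

theorem span_pair_eq_of_dvd_sub (h : a ∣ x - y) : span {a, x} = span {a, y} := by
  obtain ⟨c, hc⟩ := h
  rw [eq_add_of_sub_eq' hc, span_pair_add_left_mul]

theorem span_pair_eq_of_dvd_add (h : a ∣ x + y) : span {a, x} = span {a, y} := by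
  rw [span_pair_eq_of_dvd_sub (y := -y) (by simpa using h), span_pair_neg]

end SpanPair

section QuadraticAlgebra

open QuadraticAlgebra

section Discriminant

variable {R : Type*} [CommRing R] {a b : R}

theorem algebraTrace_eq_trace (z : QuadraticAlgebra R a b) :
    Algebra.trace R (QuadraticAlgebra R a b) z = z.trace := by
  rw [Algebra.trace_eq_matrix_trace (basis a b), Matrix.trace_fin_two,
    Algebra.leftMulMatrix_eq_repr_mul, Algebra.leftMulMatrix_eq_repr_mul, trace_def]
  simp [basis, two_mul, add_assoc]

theorem discr_basis (a b : R) : Algebra.discr R (basis a b) = b ^ 2 + 4 * a := by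
  rw [Algebra.discr_def, Matrix.det_fin_two]
  simp only [Algebra.traceMatrix_apply, Algebra.traceForm_apply, algebraTrace_eq_trace, trace_def,
    basis, Module.Basis.coe_ofEquivFun, linearEquivTuple_symm_apply, Pi.single_eq_same, ne_eq,
    one_ne_zero, zero_ne_one, not_false_eq_true, Pi.single_eq_of_ne, mk_mul_mk]
  ring

end Discriminant

section Ideal

theorem eq_span_pair_of_im_dvd {R : Type*} [CommRing R] {a b : R}
    {I : Ideal (QuadraticAlgebra R a b)} {m : R} (hm : ∀ x, algebraMap R _ x ∈ I ↔ m ∣ x)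
    {w : QuadraticAlgebra R a b} (hw : w ∈ I) (him : ∀ z ∈ I, w.im ∣ z.im) :
    I = Ideal.span {algebraMap R _ m, w} := by
  apply le_antisymm
  · intro z hz
    obtain ⟨v, hv⟩ := him z hz
    have hz' : z = algebraMap R _ (z.re - v * w.re) + algebraMap R _ v * w := by
      ext <;> simp [hv, mul_comm]
    obtain ⟨u, hu⟩ := (hm (z.re - v * w.re)).1 <| by
      rw [eq_sub_of_add_eq hz'.symm]
      exact I.sub_mem hz (I.mul_mem_left _ hw)
    rw [Ideal.mem_span_pair]
    exact ⟨algebraMap R _ u, algebraMap R _ v, by rw [← map_mul, mul_comm u, ← hu, ← hz']⟩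
  · rw [Ideal.span_le, Set.pair_subset_iff]
    exact ⟨(hm m).2 dvd_rfl, hw⟩

variable {A : Type*} [CommRing A] [IsDomain A] [IsPrincipalIdealRing A] {a b : A}

-- `k` generates the ideal of the `ω`-coordinates of elements of `I`, and `k * n` generates `I ∩ A`.
theorem exists_eq_span_mul_span_pair {I : Ideal (QuadraticAlgebra A a b)} {N : A} (hN : N ≠ 0)
    (hNI : algebraMap A _ N ∈ I) :
    ∃ k n c : A, n ∣ N ∧ n ∣ (algebraMap A (QuadraticAlgebra A a b) c + ω).norm ∧
      I = Ideal.span {algebraMap A _ k} * Ideal.span {algebraMap A _ n, algebraMap A _ c + ω} := by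
  let J : Ideal A := Submodule.map (imₗ a b) (I.restrictScalars A)
  let m := Submodule.IsPrincipal.generator (I.comap (algebraMap A _))
  let k := Submodule.IsPrincipal.generator J
  have hm (x : A) : algebraMap A _ x ∈ I ↔ m ∣ x := by
    rw [← Submodule.IsPrincipal.mem_iff_generator_dvd, Ideal.mem_comap]
  have hk (z : QuadraticAlgebra A a b) (hz : z ∈ I) : k ∣ z.im :=
    (Submodule.IsPrincipal.mem_iff_generator_dvd J).1 ⟨z, hz, rfl⟩
  obtain ⟨n, hn⟩ : k ∣ m := by
    simpa using hk (ω * algebraMap A _ m) (I.mul_mem_left _ ((hm m).2 dvd_rfl))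
  obtain ⟨z, hz, hzk : z.im = k⟩ : ∃ z ∈ I, z.im = k := Submodule.IsPrincipal.generator_mem J
  obtain ⟨c, hc⟩ : k ∣ z.re :=
    (dvd_add_left (dvd_mul_left k b)).1 <| by simpa [hzk] using hk (ω * z) (I.mul_mem_left _ hz)
  have hzc : z = algebraMap A _ k * (algebraMap A _ c + ω) := by ext <;> simp [hc, hzk]
  have hmN : m ∣ N := (hm N).1 hNI
  have hk0 : k ≠ 0 := fun h0 ↦ hN (by simpa [hn, h0] using hmN)
  refine ⟨k, n, c, (dvd_mul_left n k).trans (hn ▸ hmN), ?_, ?_⟩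
  · rw [← mul_dvd_mul_iff_left hk0, ← hn, ← hm, map_mul, algebraMap_norm_eq_mul_star, ← mul_assoc,
      ← hzc]
    exact I.mul_mem_right _ hz
  · rw [Ideal.span_mul_span', Set.singleton_mul, Set.image_pair, ← map_mul, ← hn, ← hzc]
    exact eq_span_pair_of_im_dvd hm hz fun x hx ↦ hzk ▸ hk x hx

end Ideal

end QuadraticAlgebra

theorem isInteger_of_squarefree_mul_sq {A F : Type*} [CommRing A] [IsDomain A]
    [UniqueFactorizationMonoid A] [Field F] [Algebra A F] [IsFractionRing A F] {d m : A}
    (hd : Squarefree d) {q : F} (h : algebraMap A F d * q ^ 2 = algebraMap A F m) :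
    IsLocalization.IsInteger A q := by
  have hq :
      q = algebraMap A F (IsFractionRing.num A q) / algebraMap A F (IsFractionRing.den A q) := by
    rw [← IsFractionRing.mk'_eq_div, IsFractionRing.mk'_num_den]
  have hden : algebraMap A F (IsFractionRing.den A q) ≠ 0 := by simp
  have hnum : d * IsFractionRing.num A q ^ 2 = (IsFractionRing.den A q : A) ^ 2 * m := by
    apply IsFractionRing.injective A F
    rw [hq] at h
    field_simp at h
    simpa using h
  have hdvd : (IsFractionRing.den A q : A) ^ 2 ∣ d :=
    (IsFractionRing.num_den_reduced A q).symm.pow.dvd_of_dvd_mul_right ⟨m, hnum⟩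
  exact IsFractionRing.isInteger_of_isUnit_den (hd _ (by rwa [← sq]))

theorem two_dvd_of_four_dvd_sq_sub_mul_sq {d t v : ℤ} (hd : d % 4 = 2 ∨ d % 4 = 3)
    (h : 4 ∣ t ^ 2 - d * v ^ 2) : 2 ∣ t ∧ 2 ∣ v := by
  obtain ⟨t, rfl | rfl⟩ := t.even_or_odd' <;> obtain ⟨v, rfl | rfl⟩ := v.even_or_odd' <;>
    ring_nf at h <;> omega

theorem exists_eq_mk_intCast_of_isIntegral {d : ℤ} (hd : Squarefree d) (hd4 : d % 4 = 2 ∨ d % 4 = 3)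
    {z : QuadraticAlgebra ℚ d 0} (hz : IsIntegral ℤ z) : ∃ x y : ℤ, z = ⟨x, y⟩ := by
  have hz' : IsIntegral ℤ (star z) := hz.map (starRingEnd (QuadraticAlgebra ℚ d 0)).toIntAlgHom
  have isInt {q : ℚ} (hq : IsIntegral ℤ (algebraMap ℚ (QuadraticAlgebra ℚ d 0) q)) :
      ∃ m : ℤ, (m : ℚ) = q :=
    IsIntegrallyClosed.isIntegral_iff.1
      ((isIntegral_algebraMap_iff QuadraticAlgebra.algebraMap_injective).1 hq)
  obtain ⟨t, ht⟩ := isInt (QuadraticAlgebra.algebraMap_trace_eq_add_star z ▸ hz.add hz')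
  obtain ⟨n, hn⟩ := isInt (QuadraticAlgebra.algebraMap_norm_eq_mul_star z ▸ hz.mul hz')
  rw [QuadraticAlgebra.trace_def] at ht
  rw [QuadraticAlgebra.norm_def] at hn
  obtain ⟨v, hv : (v : ℚ) = 2 * z.im⟩ := isInteger_of_squarefree_mul_sq (q := 2 * z.im)
    (m := t ^ 2 - 4 * n) hd (by push_cast [eq_intCast]; rw [ht, hn]; ring)
  obtain ⟨⟨x, hx⟩, y, hy⟩ := two_dvd_of_four_dvd_sq_sub_mul_sq (t := t) (v := v) hd4 ⟨n, by
    qify; rw [ht, hn, hv]; ring⟩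
  refine ⟨x, y, QuadraticAlgebra.ext ?_ ?_⟩
  · have := congrArg (Int.cast : ℤ → ℚ) hx
    push_cast at this
    linarith
  · have := congrArg (Int.cast : ℤ → ℚ) hy
    push_cast at this
    linarith

section LiftSqrt

/-- The `R`-algebra homomorphism `R[√d] → A` which sends `√d` to a given square root `α` of `d`. -/
noncomputable def liftSqrt {R A : Type*} [CommRing R] [Ring A] [Algebra R A] {d : R} (α : A)
    (hα : α ^ 2 = algebraMap R A d) : QuadraticAlgebra R d 0 →ₐ[R] A :=
  QuadraticAlgebra.lift ⟨α, by rw [← sq, hα, zero_smul, add_zero, Algebra.algebraMap_eq_smul_one]⟩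

theorem liftSqrt_apply {R A : Type*} [CommRing R] [Ring A] [Algebra R A] {d : R} {α : A}
    (hα : α ^ 2 = algebraMap R A d) (z : QuadraticAlgebra R d 0) :
    liftSqrt α hα z = algebraMap R A z.re + algebraMap R A z.im * α := by
  rw [Algebra.algebraMap_eq_smul_one, ← Algebra.smul_def]
  rfl

theorem liftSqrt_bijective {F A : Type*} [Field F] [CommRing A] [Nontrivial A] [Algebra F A] {d : F}
    {α : A} (hd : ¬ IsSquare d) (hα : α ^ 2 = algebraMap F A d) (hA : Algebra.adjoin F {α} = ⊤) :
    Function.Bijective (liftSqrt α hα) := by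
  have : Fact (∀ r : F, r ^ 2 ≠ d + 0 * r) :=
    ⟨fun r hr ↦ hd ⟨r, by rw [← sq, hr, zero_mul, add_zero]⟩⟩
  refine ⟨(liftSqrt α hα).injective, ?_⟩
  rw [← AlgHom.range_eq_top, eq_top_iff, ← hA, Algebra.adjoin_le_iff, Set.singleton_subset_iff]
  exact ⟨QuadraticAlgebra.omega, by simp [liftSqrt_apply]⟩

end LiftSqrt

section RingOfIntegers

variable {K : Type*} [Field K] [NumberField K] {d : ℤ}

theorem not_isSquare_of_emod_four (hd4 : d % 4 = 2 ∨ d % 4 = 3) : ¬ IsSquare d := by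
  rintro ⟨r, rfl⟩
  obtain ⟨s, rfl | rfl⟩ := r.even_or_odd' <;> ring_nf at hd4 <;> omega

theorem nonempty_algEquiv_ringOfIntegers {α : K} (hd : Squarefree d) (hd4 : d % 4 = 2 ∨ d % 4 = 3)
    (hα : α ^ 2 = d) (hK : Algebra.adjoin ℚ {α} = ⊤) :
    Nonempty (QuadraticAlgebra ℤ d 0 ≃ₐ[ℤ] 𝓞 K) := by
  obtain ⟨θ, rfl⟩ : ∃ θ : 𝓞 K, θ = α :=
    ⟨⟨α, .of_pow two_pos (hα ▸ isIntegral_algebraMap (x := d))⟩, rfl⟩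
  have hθ : θ ^ 2 = algebraMap ℤ (𝓞 K) d := RingOfIntegers.ext (by simpa using hα)
  replace hα : (θ : K) ^ 2 = algebraMap ℚ K d := by simpa using hα
  have hbij := liftSqrt_bijective (Rat.isSquare_intCast_iff.not.2 (not_isSquare_of_emod_four hd4))
    hα hK
  have hcoe (z : QuadraticAlgebra ℤ d 0) :
      (liftSqrt θ hθ z : K) = liftSqrt (θ : K) hα ⟨z.re, z.im⟩ := by
    simp [liftSqrt_apply]
  refine ⟨AlgEquiv.ofBijective (liftSqrt θ hθ) ⟨fun z w hzw ↦ ?_, fun x ↦ ?_⟩⟩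
  · have hzw' := hbij.1 ((hcoe z).symm.trans ((congrArg _ hzw).trans (hcoe w)))
    simpa [QuadraticAlgebra.ext_iff] using hzw'
  · obtain ⟨z, hz⟩ := hbij.2 x
    have hzint : IsIntegral ℤ z := by
      rw [← isIntegral_algHom_iff ((liftSqrt (θ : K) hα).restrictScalars ℤ) hbij.1]
      simpa [hz] using x.isIntegral_coe
    obtain ⟨u, v, rfl⟩ := exists_eq_mk_intCast_of_isIntegral hd hd4 hzint
    exact ⟨⟨u, v⟩, RingOfIntegers.ext (by rw [hcoe, hz])⟩

end RingOfIntegers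

section Imaginary

open QuadraticAlgebra

theorem isUnit_of_norm_lt_of_dvd {d : ℤ} (hd : d ≤ 0) {g z : QuadraticAlgebra ℤ d 0}
    (hg : g.norm < -d) (hgz : g ∣ z) (hz : IsUnit z.im) : IsUnit g := by
  have him : g.im = 0 := by
    by_contra h
    have him : 0 < g.im ^ 2 := by positivity
    rw [norm_def] at hg
    nlinarith [sq_nonneg g.re]
  obtain ⟨r, rfl⟩ : ∃ r, algebraMap ℤ _ r = g := ⟨g.re, by ext <;> simp [him]⟩
  exact (isUnit_of_dvd_unit (algebraMap_dvd_iff.1 hgz).2 hz).map (algebraMap ℤ _)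

end Imaginary

section Neg17

open QuadraticAlgebra Ideal

theorem one_add_omega_mul_one_sub_omega :
    (1 + ω : QuadraticAlgebra ℤ (-17) 0) * (1 - ω) = 18 := by
  ext <;> simp

theorem eight_sub_omega_mul_eight_add_omega :
    (8 - ω : QuadraticAlgebra ℤ (-17) 0) * (8 + ω) = 81 := by
  ext <;> simp

/-- One of the two primes above `3` in `ℤ[√-17]`. -/
def primeThree : Ideal (QuadraticAlgebra ℤ (-17) 0) :=
  span {3, 1 + ω}

theorem primeThree_sq : primeThree ^ 2 = span {9, 1 + ω} := by
  rw [primeThree, span_pair_pow_of_isCoprime_add (y := 1 - ω) ⟨1, -1, by ring⟩ ⟨2, by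
    rw [one_add_omega_mul_one_sub_omega]; norm_num⟩]
  norm_num

theorem primeThree_pow_four : primeThree ^ 4 = span {8 - ω} := by
  rw [primeThree, span_pair_eq_of_dvd_add (y := 8 - ω) ⟨3, by ring⟩,
    span_pair_pow_of_isCoprime_add (y := 8 + ω) ⟨-5, 1, by ring⟩ ⟨1, by
    rw [eight_sub_omega_mul_eight_add_omega]; norm_num⟩, span_pair_eq_span_right_iff_dvd]
  exact ⟨8 + ω, by rw [eight_sub_omega_mul_eight_add_omega]; norm_num⟩

theorem span_two_mul_primeThree_sq : span {2, 1 + ω} * primeThree ^ 2 = span {1 + ω} := by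
  rw [primeThree_sq, span_pair_mul_span_pair_of_isCoprime ⟨-4, 1, by norm_num⟩,
    span_pair_eq_span_right_iff_dvd]
  exact ⟨1 - ω, by rw [one_add_omega_mul_one_sub_omega]; norm_num⟩

theorem primeThree_mul_conj : primeThree * span {3, 1 - ω} = span {3} :=
  span_pair_mul_span_pair_conj ⟨1, -1, by ring⟩ ⟨6, by
    rw [one_add_omega_mul_one_sub_omega]; norm_num⟩

theorem not_isPrincipal_primeThree_sq : ¬ (primeThree ^ 2).IsPrincipal := by
  rw [primeThree_sq]
  rintro ⟨g, hg⟩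
  rw [submodule_span_eq] at hg
  have hg9 : g ∣ 9 := by rw [← mem_span_singleton, ← hg]; exact subset_span (by simp)
  have hgω : g ∣ 1 + ω := by rw [← mem_span_singleton, ← hg]; exact subset_span (by simp)
  have hnorm : g.norm ∣ 9 := by
    have h81 : g.norm ∣ 81 := by simpa [norm_def] using map_dvd QuadraticAlgebra.norm hg9
    have h18 : g.norm ∣ 18 := by simpa [norm_def] using map_dvd QuadraticAlgebra.norm hgω
    rw [show (9 : ℤ) = 81 - 4 * 18 by norm_num]
    exact h81.sub (h18.mul_left 4)
  have hlt : g.norm < - -17 := (Int.le_of_dvd (by norm_num) hnorm).trans_lt (by norm_num)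
  have hunit : IsUnit g := isUnit_of_norm_lt_of_dvd (by norm_num) hlt hgω (by simp)
  refine span_pair_ne_top (y := 1 - ω) ⟨2, ?_⟩ ?_ (hg.trans (span_singleton_eq_top.2 hunit))
  · rw [one_add_omega_mul_one_sub_omega]; norm_num
  · rintro ⟨z, hz⟩
    have h9 : (9 : ℤ) ∣ -1 := ⟨z.im, by simpa using congrArg im hz⟩
    norm_num at h9

theorem residue_of_dvd_sq_add_seventeen {n : ℕ} (hn0 : 0 < n) (hn : n ≤ 5) {c : ℤ}
    (h : (n : ℤ) ∣ c ^ 2 + 17) : n = 1 ∨ n = 2 ∧ 2 ∣ c - 1 ∨ n = 3 ∧ (3 ∣ c - 1 ∨ 3 ∣ c + 1) := by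
  rw [← ZMod.intCast_zmod_eq_zero_iff_dvd] at h
  have h2 := ZMod.intCast_zmod_eq_zero_iff_dvd (c - 1) 2
  have h3 := ZMod.intCast_zmod_eq_zero_iff_dvd (c - 1) 3
  have h3' := ZMod.intCast_zmod_eq_zero_iff_dvd (c + 1) 3
  push_cast at h h2 h3 h3'
  rw [← h2, ← h3, ← h3']
  interval_cases n
  · simp
  · exact .inr (.inl ⟨rfl, (by decide : ∀ x : ZMod 2, x ^ 2 + 17 = 0 → x - 1 = 0) c h⟩)
  · exact .inr (.inr ⟨rfl, (by decide : ∀ x : ZMod 3, x ^ 2 + 17 = 0 → x - 1 = 0 ∨ x + 1 = 0) c h⟩)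
  · exact ((by decide : ∀ x : ZMod 4, x ^ 2 + 17 ≠ 0) c h).elim
  · exact ((by decide : ∀ x : ZMod 5, x ^ 2 + 17 ≠ 0) c h).elim

theorem exists_isPrincipal_span_pair_mul_primeThree_pow {n : ℕ} (hn0 : 0 < n) (hn : n ≤ 5) {c : ℤ}
    (h : (n : ℤ) ∣ (algebraMap ℤ (QuadraticAlgebra ℤ (-17) 0) c + ω).norm) :
    ∃ j, (span {(n : QuadraticAlgebra ℤ (-17) 0), algebraMap ℤ _ c + ω} *
      primeThree ^ j).IsPrincipal := by
  have hnorm : (algebraMap ℤ (QuadraticAlgebra ℤ (-17) 0) c + ω).norm = c ^ 2 + 17 := by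
    simp [norm_def, sq]
  rw [hnorm] at h
  rcases residue_of_dvd_sq_add_seventeen hn0 hn h with rfl | ⟨rfl, hc⟩ | ⟨rfl, hc | hc⟩
  · exact ⟨0, 1, by simp [span_pair_eq_span_left_iff_dvd.2]⟩
  · have hcω : (2 : QuadraticAlgebra ℤ (-17) 0) ∣ algebraMap ℤ _ c + ω - (1 + ω) := by
      simpa using map_dvd (algebraMap ℤ (QuadraticAlgebra ℤ (-17) 0)) hc
    refine ⟨2, 1 + ω, ?_⟩
    rw [Nat.cast_ofNat, span_pair_eq_of_dvd_sub hcω, span_two_mul_primeThree_sq, submodule_span_eq]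
  · have hcω : (3 : QuadraticAlgebra ℤ (-17) 0) ∣ algebraMap ℤ _ c + ω - (1 + ω) := by
      simpa using map_dvd (algebraMap ℤ (QuadraticAlgebra ℤ (-17) 0)) hc
    refine ⟨3, 8 - ω, ?_⟩
    rw [Nat.cast_ofNat, span_pair_eq_of_dvd_sub hcω, ← primeThree, ← pow_succ',
      primeThree_pow_four, submodule_span_eq]
  · have hcω : (3 : QuadraticAlgebra ℤ (-17) 0) ∣ algebraMap ℤ _ c + ω + (1 - ω) := by
      simpa using map_dvd (algebraMap ℤ (QuadraticAlgebra ℤ (-17) 0)) hc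
    refine ⟨1, 3, ?_⟩
    rw [Nat.cast_ofNat, span_pair_eq_of_dvd_add hcω, pow_one, mul_comm, primeThree_mul_conj,
      submodule_span_eq]

theorem exists_isPrincipal_mul_primeThree_pow {I : Ideal (QuadraticAlgebra ℤ (-17) 0)} {N : ℕ}
    (hN0 : 0 < N) (hN : N ≤ 5) (hNI : (N : QuadraticAlgebra ℤ (-17) 0) ∈ I) :
    ∃ j, (I * primeThree ^ j).IsPrincipal := by
  obtain ⟨k, n, c, hnN, hnc, rfl⟩ :=
    exists_eq_span_mul_span_pair (N := (N : ℤ)) (by exact_mod_cast hN0.ne') (by simpa using hNI)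
  have habs : span {algebraMap ℤ (QuadraticAlgebra ℤ (-17) 0) n, algebraMap ℤ _ c + ω} =
      span {(n.natAbs : QuadraticAlgebra ℤ (-17) 0), algebraMap ℤ _ c + ω} := by
    obtain h | h := n.natAbs_eq <;> rw [h] <;> simp
  have hn : n.natAbs ∣ N := Int.natAbs_dvd_natAbs.2 hnN
  obtain ⟨j, g, hg⟩ := exists_isPrincipal_span_pair_mul_primeThree_pow
    (Nat.pos_of_dvd_of_pos hn hN0) ((Nat.le_of_dvd hN0 hn).trans hN) (Int.natAbs_dvd.2 hnc)
  refine ⟨j, algebraMap ℤ _ k * g, ?_⟩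
  rw [mul_assoc, habs, hg, submodule_span_eq, submodule_span_eq, span_singleton_mul_span_singleton]

end Neg17

section ClassGroup

variable {R : Type*} [CommRing R] [IsDedekindDomain R]

theorem isCyclic_classGroup_of_isPrincipal_mul_pow {Q : Ideal R} {p n : ℕ} [Fact p.Prime]
    (hgen : ∀ C : ClassGroup R, ∃ I : nonZeroDivisors (Ideal R),
      ClassGroup.mk0 I = C ∧ ∃ j, ((I : Ideal R) * Q ^ j).IsPrincipal)
    (hnot : ¬ (Q ^ p ^ n).IsPrincipal) (hpow : (Q ^ p ^ (n + 1)).IsPrincipal) :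
    IsCyclic (ClassGroup R) ∧ Nat.card (ClassGroup R) = p ^ (n + 1) := by
  have hQ : Q ∈ nonZeroDivisors (Ideal R) := by
    rw [mem_nonZeroDivisors_iff_ne_zero]
    rintro rfl
    refine hnot ?_
    rw [zero_pow (pow_ne_zero n (Fact.out : p.Prime).ne_zero)]
    exact bot_isPrincipal
  let q : ClassGroup R := ClassGroup.mk0 ⟨Q, hQ⟩
  have hq (m : ℕ) : q ^ m = 1 ↔ (Q ^ m).IsPrincipal := by
    rw [← map_pow]
    exact ClassGroup.mk0_eq_one_iff (pow_mem hQ m)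
  have hmem (C : ClassGroup R) : C ∈ Subgroup.zpowers q := by
    obtain ⟨I, rfl, j, hj⟩ := hgen C
    have hone : ClassGroup.mk0 I * q ^ j = 1 := by
      rw [← map_pow, ← map_mul]
      exact (ClassGroup.mk0_eq_one_iff (mul_mem I.2 (pow_mem hQ j))).2 hj
    rw [eq_inv_of_mul_eq_one_left hone]
    exact inv_mem (Subgroup.npow_mem_zpowers q j)
  have hord : orderOf q = p ^ (n + 1) :=
    orderOf_eq_prime_pow (mt (hq _).1 hnot) ((hq _).2 hpow)
  exact ⟨⟨q, hmem⟩, hord ▸ (orderOf_eq_card_of_forall_mem_zpowers hmem).symm⟩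

end ClassGroup

section RingEquiv

variable {R S : Type*} [CommRing R] [CommRing S] (e : R ≃+* S) {I : Ideal R}

theorem map_symm_map_ringEquiv : (I.map e).map e.symm = I :=
  Ideal.map_of_equiv e

theorem isPrincipal_map_ringEquiv_iff : (I.map e).IsPrincipal ↔ I.IsPrincipal := by
  refine ⟨fun h ↦ ?_, fun h ↦ h.map_ringHom e⟩
  rw [← map_symm_map_ringEquiv e (I := I)]
  exact h.map_ringHom e.symm

end RingEquiv

section NumberField

variable {K : Type*} [Field K] [NumberField K]

theorem finrank_eq_two_of_algEquiv_ringOfIntegers {a b : ℤ} (e : QuadraticAlgebra ℤ a b ≃ₐ[ℤ] 𝓞 K) :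
    Module.finrank ℚ K = 2 := by
  rw [← RingOfIntegers.rank, ← e.toLinearEquiv.finrank_eq, QuadraticAlgebra.finrank_eq_two]

theorem discr_eq_of_algEquiv_ringOfIntegers {a b : ℤ} (e : QuadraticAlgebra ℤ a b ≃ₐ[ℤ] 𝓞 K) :
    discr K = b ^ 2 + 4 * a := by
  rw [← discr_eq_discr K ((QuadraticAlgebra.basis a b).map e.toLinearEquiv),
    ← discr_basis, Algebra.discr_eq_discr_of_algEquiv _ e]
  rfl

theorem exists_absNorm_le_of_finrank_eq_two (h : Module.finrank ℚ K = 2) (C : ClassGroup (𝓞 K)) :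
    ∃ I : nonZeroDivisors (Ideal (𝓞 K)), ClassGroup.mk0 I = C ∧
      (Ideal.absNorm (I : Ideal (𝓞 K)) : ℝ) ≤ 2 / Real.pi * √|discr K| := by
  obtain ⟨I, rfl, hI⟩ := exists_ideal_in_class_of_norm_le C
  refine ⟨I, rfl, hI.trans ?_⟩
  have hc : InfinitePlace.nrComplexPlaces K ≤ 1 := by
    have := InfinitePlace.card_add_two_mul_card_eq_rank K
    omega
  have hpi : 1 ≤ 4 / Real.pi := (one_le_div Real.pi_pos).2 Real.pi_le_four
  calc (4 / Real.pi) ^ InfinitePlace.nrComplexPlaces K *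
        ((Module.finrank ℚ K).factorial / Module.finrank ℚ K ^ Module.finrank ℚ K * √|discr K|)
      ≤ (4 / Real.pi) ^ 1 * ((Nat.factorial 2 : ℝ) / (2 : ℕ) ^ 2 * √|discr K|) := by
        rw [h]
        gcongr
    _ = 2 / Real.pi * √|discr K| := by
        simp only [Nat.factorial, Nat.cast_ofNat]
        ring

theorem exists_absNorm_le_five (e : QuadraticAlgebra ℤ (-17) 0 ≃ₐ[ℤ] 𝓞 K) (C : ClassGroup (𝓞 K)) :
    ∃ I : nonZeroDivisors (Ideal (𝓞 K)), ClassGroup.mk0 I = C ∧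
      Ideal.absNorm (I : Ideal (𝓞 K)) ≤ 5 := by
  obtain ⟨I, rfl, hI⟩ :=
    exists_absNorm_le_of_finrank_eq_two (finrank_eq_two_of_algEquiv_ringOfIntegers e) C
  have hsqrt : √|(discr K : ℝ)| < 9 := by
    rw [discr_eq_of_algEquiv_ringOfIntegers e, Real.sqrt_lt' (by norm_num)]
    norm_num
  have hlt : (Ideal.absNorm (I : Ideal (𝓞 K)) : ℝ) < 6 :=
    calc (Ideal.absNorm (I : Ideal (𝓞 K)) : ℝ) ≤ 2 / Real.pi * √|discr K| := hI
      _ < 2 / 3 * 9 := by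
        gcongr
        exact Real.pi_gt_three
      _ = 6 := by norm_num
  exact ⟨I, rfl, Nat.lt_succ_iff.1 (by exact_mod_cast hlt)⟩

theorem exists_isPrincipal_mul_map_primeThree_pow (e : QuadraticAlgebra ℤ (-17) 0 ≃+* 𝓞 K)
    {I : Ideal (𝓞 K)} (hI0 : I ≠ ⊥) (hI : Ideal.absNorm I ≤ 5) :
    ∃ j, (I * (primeThree.map e) ^ j).IsPrincipal := by
  have hmem : (Ideal.absNorm I : QuadraticAlgebra ℤ (-17) 0) ∈ I.map e.symm := by
    simpa using Ideal.mem_map_of_mem e.symm (Ideal.absNorm_mem I)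
  obtain ⟨j, hj⟩ := exists_isPrincipal_mul_primeThree_pow
    (Nat.pos_of_ne_zero (mt Ideal.absNorm_eq_zero_iff.1 hI0)) hI hmem
  refine ⟨j, ?_⟩
  rw [← isPrincipal_map_ringEquiv_iff e.symm, Ideal.map_mul, Ideal.map_pow, map_symm_map_ringEquiv]
  exact hj

end NumberField

/-- The ideal class group of the ring of integers of `K = ℚ(√−17)` is cyclic of order 4. -/
theorem classGroup_cyclic_of_order_four
    (K : Type*) [Field K] [NumberField K] (ω : K)
    (hω : ω ^ 2 = -17) (hK : Algebra.adjoin ℚ {ω} = ⊤) :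
    IsCyclic (ClassGroup (𝓞 K)) ∧ Nat.card (ClassGroup (𝓞 K)) = 4 := by
  have hsq : Squarefree (-17 : ℤ) := (Int.prime_iff_natAbs_prime.2 (by norm_num)).squarefree
  obtain ⟨e⟩ := nonempty_algEquiv_ringOfIntegers (d := -17) hsq (by norm_num) (by simpa using hω) hK
  refine isCyclic_classGroup_of_isPrincipal_mul_pow (Q := primeThree.map e.toRingEquiv) (p := 2)
    (n := 1) (fun C ↦ ?_) ?_ ?_
  · obtain ⟨I, rfl, hI⟩ := exists_absNorm_le_five e C
    exact ⟨I, rfl,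
      exists_isPrincipal_mul_map_primeThree_pow e.toRingEquiv (nonZeroDivisors.ne_zero I.2) hI⟩
  · rw [← Ideal.map_pow, isPrincipal_map_ringEquiv_iff]
    exact not_isPrincipal_primeThree_sq
  · rw [← Ideal.map_pow, isPrincipal_map_ringEquiv_iff]
    exact ⟨8 - QuadraticAlgebra.omega, primeThree_pow_four⟩
end

section
/- Let p be an odd rational prime with p ≠ 17 such that p splits in K = ℚ(√−17) (equivalently, −17 is a nonzero quadratic residue modulo p). Then for every prime ideal 𝔭 of 𝓞_K lying above p, the ideal class [𝔭] is a square in the class group Cl(K) if and only if p ≡ 1 (mod 4). -/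
open NumberField nonZeroDivisors

/-!
Genus theory: the norm form `u² + 17v²` of `ℚ(√-17)` tells the two cosets of the squares in the
class group apart modulo `4`. If the class of `I` is a square, then `N(I)` is a value of this form
at a rational point, and an odd integer of this kind is `≡ 1 (mod 4)`, because `17 ≡ 1 (mod 4)`.
Conversely, every class is represented by an ideal of norm at most `(4/π)√17 < 6`. With
`Q = (2, 1 + √-17)` and `T = (3, 1 + √-17)` we have `Q² = (2)` and `QT² = (1 + √-17)`, so these
representatives show that for each class `C` one of `C` and `C·[T]` is a square. If `[I]` is not
a square, then `[IT]` is, whence `3·N(I) ≡ 1 (mod 4)`.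
-/

section Parity

theorem sq_emod_four (a : ℤ) : a ^ 2 % 4 = a % 2 := by
  rcases Int.even_or_odd' a with ⟨c, rfl | rfl⟩ <;> ring_nf <;> omega

variable {d : ℤ}

theorem sq_add_mul_sq_emod_four (hd : d % 4 = 1) (a b : ℤ) :
    (a ^ 2 + d * b ^ 2) % 4 = a % 2 + b % 2 := by
  rw [Int.add_emod, Int.mul_emod, sq_emod_four, sq_emod_four, hd]
  omega

theorem emod_four_eq_one_of_mul_sq_eq_sq_add_mul_sq (hd : d % 4 = 1) {n : ℤ} (hn : Odd n)
    {m : ℕ} (hm : m ≠ 0) {a b : ℤ} (h : n * m ^ 2 = a ^ 2 + d * b ^ 2) : n % 4 = 1 := by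
  induction m using Nat.strong_induction_on generalizing a b with
  | _ m ih =>
    have hmod : (n % 4) * (m % 2) % 4 = a % 2 + b % 2 := by
      rw [← sq_add_mul_sq_emod_four hd, ← h, Int.mul_emod n, sq_emod_four]
    rw [Int.odd_iff] at hn
    rcases Nat.even_or_odd' m with ⟨k, rfl | rfl⟩
    · -- `a² + d b² ≡ 0 (mod 4)` forces `a` and `b` to be even: descent to `m / 2`.
      have hparity : (2 * k : ℕ) % 2 = (0 : ℤ) := by omega
      rw [hparity, mul_zero, Int.zero_emod] at hmod
      obtain ⟨a, rfl⟩ : 2 ∣ a := by omega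
      obtain ⟨b, rfl⟩ : 2 ∣ b := by omega
      refine ih k (by omega) (by omega) (a := a) (b := b) ?_
      push_cast at h
      linarith
    · have hparity : (2 * k + 1 : ℕ) % 2 = (1 : ℤ) := by omega
      rw [hparity, mul_one] at hmod
      omega

theorem emod_four_eq_one_of_eq_rat_sq_add_mul_sq (hd : d % 4 = 1) {n : ℤ} (hn : Odd n)
    {u v : ℚ} (h : (n : ℚ) = u ^ 2 + d * v ^ 2) : n % 4 = 1 := by
  refine emod_four_eq_one_of_mul_sq_eq_sq_add_mul_sq hd hn
    (mul_ne_zero u.den_ne_zero v.den_ne_zero) (a := u.num * v.den) (b := v.num * u.den) ?_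
  rw [← @Int.cast_inj ℚ]
  push_cast
  rw [h, ← u.mul_den_eq_num, ← v.mul_den_eq_num]
  ring

end Parity

section SquareRootModPrime

theorem dvd_of_sq_dvd_sq_add_of_sq_dvd_sq_add {p : ℕ} (hp : p.Prime) (hp2 : p ≠ 2) {s d : ℤ}
    (hs : (p : ℤ) ^ 2 ∣ s ^ 2 + d) (hsp : (p : ℤ) ^ 2 ∣ (s + p) ^ 2 + d) : (p : ℤ) ∣ s := by
  have hdiff : (p : ℤ) * p ∣ p * (2 * s + p) := by
    rw [← sq, show p * (2 * s + p) = (s + p) ^ 2 + d - (s ^ 2 + d) by ring]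
    exact dvd_sub hsp hs
  have h2s : (p : ℤ) ∣ 2 * s :=
    (dvd_add_left dvd_rfl).1 ((mul_dvd_mul_iff_left (by exact_mod_cast hp.ne_zero)).1 hdiff)
  refine ((Nat.prime_iff_prime_int.1 hp).dvd_or_dvd h2s).resolve_left fun h ↦ hp2 ?_
  exact (Nat.prime_dvd_prime_iff_eq hp Nat.prime_two).1 (by exact_mod_cast h)

theorem exists_dvd_sq_add_and_not_dvd_of_isSquare_neg {p : ℕ} {d : ℤ}
    (hsplit : IsSquare (-d : ZMod p)) (hne : (d : ZMod p) ≠ 0) :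
    ∃ s : ℤ, (p : ℤ) ∣ s ^ 2 + d ∧ ¬ (p : ℤ) ∣ s := by
  obtain ⟨r, hr⟩ := hsplit
  obtain ⟨s, rfl⟩ := ZMod.intCast_surjective r
  simp only [← ZMod.intCast_zmod_eq_zero_iff_dvd]
  refine ⟨s, ?_, fun hs ↦ hne (by simpa [hs] using hr)⟩
  push_cast
  linear_combination -hr

end SquareRootModPrime

section Ideals

variable {R : Type*} [CommRing R] {p q m x y α β γ : R}

theorem span_pair_mul_span_pair_eq_span_singleton (hxy : x * y = p * m)
    (hone : α * p + β * (x + y) + γ * m = 1) :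
    Ideal.span {p, x} * Ideal.span {p, y} = Ideal.span {p} := by
  rw [Ideal.span_pair_mul_span_pair]
  refine le_antisymm (Ideal.span_le.2 ?_) ((Ideal.span_singleton_le_iff_mem _).2 ?_)
  · simp [Set.insert_subset_iff, Ideal.mem_span_singleton, hxy]
  · simp only [Ideal.mem_span_insert, Ideal.mem_span_singleton']
    exact ⟨α, _, ⟨β, _, ⟨β, _, ⟨γ, rfl⟩, rfl⟩, rfl⟩, by linear_combination -p * hone - γ * hxy⟩

theorem span_pair_mul_span_pair_eq_span_pair (hxy : x * y = p * q * m)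
    (hone : α * p + β * q + γ * (x + y) = 1) :
    Ideal.span {p, x} * Ideal.span {q, x} = Ideal.span {p * q, x} := by
  rw [Ideal.span_pair_mul_span_pair]
  refine le_antisymm (Ideal.span_le.2 ?_) (Ideal.span_le.2 ?_)
  · rintro z (rfl | rfl | rfl | rfl) <;> rw [SetLike.mem_coe, Ideal.mem_span_pair]
    exacts [⟨1, 0, by ring⟩, ⟨0, p, by ring⟩, ⟨0, q, by ring⟩, ⟨0, x, by ring⟩]
  · rintro z (rfl | rfl) <;> simp only [SetLike.mem_coe, Ideal.mem_span_insert,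
      Ideal.mem_span_singleton']
    · exact ⟨1, _, ⟨0, _, ⟨0, _, ⟨0, rfl⟩, rfl⟩, rfl⟩, by ring⟩
    · exact ⟨γ * m, _, ⟨α, _, ⟨β, _, ⟨γ, rfl⟩, rfl⟩, rfl⟩,
        by linear_combination -z * hone + γ * hxy⟩

theorem isSquare_zmod_of_card_quotient_eq {I : Ideal R} {p : ℕ}
    (hp : p.Prime) (hI : Nat.card (R ⧸ I) = p) {a : ℤ} (hx : x ^ 2 = a) :
    IsSquare (a : ZMod p) := by
  have : Finite (R ⧸ I) := Nat.finite_of_card_ne_zero (hI ▸ hp.ne_zero)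
  have := Fintype.ofFinite (R ⧸ I)
  let e := ZMod.ringEquivOfPrime (R ⧸ I) hp (by rw [← hI, Nat.card_eq_fintype_card])
  refine ⟨e.symm (Ideal.Quotient.mk I x), e.injective ?_⟩
  rw [map_intCast, ← map_mul, RingEquiv.apply_symm_apply, ← map_mul, ← sq, hx, map_intCast]

end Ideals

section Dedekind

variable {R : Type*} [CommRing R] [IsDedekindDomain R]

theorem exists_mk0_eq_pow_of_dvd
    {I Q : (Ideal R)⁰} (hQ : (Q : Ideal R).IsPrime) {n : ℕ}
    (h : (I : Ideal R) ∣ (Q : Ideal R) ^ n) :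
    ∃ i : ℕ, ClassGroup.mk0 I = ClassGroup.mk0 Q ^ i := by
  have hQ0 : (Q : Ideal R) ≠ ⊥ := nonZeroDivisors.ne_zero Q.2
  obtain ⟨i, -, hi⟩ := (dvd_prime_pow (Ideal.prime_of_isPrime hQ0 hQ) n).1 h
  refine ⟨i, ?_⟩
  rw [← map_pow]
  congr 1
  exact Subtype.ext (associated_iff_eq.1 hi)

theorem eq_of_le_of_absNorm_eq [Module.Free ℤ R] {I J : Ideal R} (hle : I ≤ J)
    (hnorm : Ideal.absNorm I = Ideal.absNorm J)
    (hJ : Ideal.absNorm J ≠ 0) : I = J := by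
  obtain ⟨L, rfl⟩ := Ideal.dvd_iff_le.2 hle
  rw [map_mul, mul_eq_left₀ hJ, Ideal.absNorm_eq_one_iff] at hnorm
  rw [hnorm, Ideal.mul_top]

end Dedekind

section Quadratic

theorem exists_basis_one_sqrt {F L : Type*} [Field F] [Field L] [Algebra F L] {a : F} {ω : L}
    (hω : ω ^ 2 = algebraMap F L a) (ha : ¬ IsSquare a) (htop : Algebra.adjoin F {ω} = ⊤) :
    ∃ b : Module.Basis (Fin 2) F L, b 0 = 1 ∧ b 1 = ω := by
  have hroot : Polynomial.aeval ω (Polynomial.X ^ 2 - Polynomial.C a) = 0 := by simp [hω]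
  have hmonic := Polynomial.monic_X_pow_sub_C a two_ne_zero
  have hirr : Irreducible (Polynomial.X ^ 2 - Polynomial.C a) :=
    X_pow_sub_C_irreducible_of_prime Nat.prime_two fun b hb ↦ ha ⟨b, by rw [← hb, sq]⟩
  have hint : IsIntegral F ω := ⟨_, hmonic, hroot⟩
  have hdim : (PowerBasis.ofAdjoinEqTop hint htop).dim = 2 := by
    rw [PowerBasis.ofAdjoinEqTop_dim hint htop,
      ← minpoly.eq_of_irreducible_of_monic hirr hroot hmonic, Polynomial.natDegree_X_pow_sub_C]
  refine ⟨(PowerBasis.ofAdjoinEqTop hint htop).basis.reindex (finCongr hdim), ?_, ?_⟩ <;>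
    rw [Module.Basis.reindex_apply, PowerBasis.basis_eq_pow,
      PowerBasis.ofAdjoinEqTop_gen hint htop]
  exacts [pow_zero ω, pow_one ω]

variable {R S : Type*} [CommRing R] [CommRing S] [Algebra R S] {a : R} {ω : S}
  {b : Module.Basis (Fin 2) R S}

theorem leftMulMatrix_basis_one_sqrt (hω : ω ^ 2 = algebraMap R S a) (h0 : b 0 = 1)
    (h1 : b 1 = ω) (x y : R) :
    Algebra.leftMulMatrix b (algebraMap R S x + algebraMap R S y * ω) = !![x, a * y; y, x] := by
  have hmul0 : (algebraMap R S x + algebraMap R S y * ω) * b 0 = x • b 0 + y • b 1 := by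
    rw [h0, h1, Algebra.smul_def, Algebra.smul_def]
    ring
  have hmul1 : (algebraMap R S x + algebraMap R S y * ω) * b 1 = (a * y) • b 0 + x • b 1 := by
    rw [h0, h1, Algebra.smul_def, Algebra.smul_def, map_mul]
    linear_combination algebraMap R S y * hω
  ext i j
  rw [Algebra.leftMulMatrix_eq_repr_mul]
  fin_cases i <;> fin_cases j <;> simp [hmul0, hmul1]

theorem norm_algebraMap_add_algebraMap_mul_sqrt (hω : ω ^ 2 = algebraMap R S a) (h0 : b 0 = 1)
    (h1 : b 1 = ω) (x y : R) :
    Algebra.norm R (algebraMap R S x + algebraMap R S y * ω) = x ^ 2 - a * y ^ 2 := by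
  rw [Algebra.norm_eq_matrix_det b, leftMulMatrix_basis_one_sqrt hω h0 h1, Matrix.det_fin_two_of]
  ring

theorem trace_algebraMap_add_algebraMap_mul_sqrt (hω : ω ^ 2 = algebraMap R S a)
    (h0 : b 0 = 1) (h1 : b 1 = ω) (x y : R) :
    Algebra.trace R S (algebraMap R S x + algebraMap R S y * ω) = 2 * x := by
  rw [Algebra.trace_eq_matrix_trace b, leftMulMatrix_basis_one_sqrt hω h0 h1,
    Matrix.trace_fin_two_of, two_mul]

theorem discr_basis_one_sqrt (hω : ω ^ 2 = algebraMap R S a) (h0 : b 0 = 1) (h1 : b 1 = ω) :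
    Algebra.discr R b = 4 * a := by
  have htrace := trace_algebraMap_add_algebraMap_mul_sqrt hω h0 h1
  have htrace_one : Algebra.trace R S 1 = 2 := by simpa using htrace 1 0
  have htrace_sqrt : Algebra.trace R S ω = 0 := by simpa using htrace 0 1
  have htrace_sq : Algebra.trace R S (ω * ω) = 2 * a := by
    rw [← sq, hω]; simpa using htrace a 0
  rw [Algebra.discr_def, Matrix.det_fin_two]
  simp only [Algebra.traceMatrix_apply, Algebra.traceForm_apply, h0, h1, one_mul, mul_one,
    htrace_one, htrace_sqrt, htrace_sq]
  ring

end Quadratic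

section NumberField

variable {K : Type*} [Field K] [NumberField K]

theorem abs_discr_le_abs_discr_of_isIntegral {ι : Type*} [Fintype ι] [DecidableEq ι]
    (b : Module.Basis ι ℚ K) (hb : ∀ i, IsIntegral ℤ (b i)) :
    |(discr K : ℚ)| ≤ |Algebra.discr ℚ b| := by
  let e := (integralBasis K).indexEquiv b
  let B := (integralBasis K).reindex e
  have hdet : IsIntegral ℤ (B.toMatrix b).det := by
    refine IsIntegral.det fun i j ↦ ?_
    have hrepr := integralBasis_repr_apply K ⟨b j, hb j⟩ (e.symm i)
    rw [Module.Basis.toMatrix_apply, Module.Basis.repr_reindex_apply]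
    exact hrepr ▸ isIntegral_algebraMap
  obtain ⟨r, hr⟩ := IsIntegrallyClosed.isIntegral_iff.1 hdet
  have hdiscr : Algebra.discr ℚ b = r ^ 2 * discr K := by
    rw [← B.toMatrix_map_vecMul b, Algebra.discr_of_matrix_vecMul, Module.Basis.coe_reindex,
      Algebra.discr_reindex, ← coe_discr, ← hr, eq_intCast]
  have hr0 : r ≠ 0 := by
    rintro rfl
    exact Algebra.discr_not_zero_of_basis ℚ b (by simpa using hdiscr)
  have hr1 : (1 : ℚ) ≤ r ^ 2 := by exact_mod_cast Int.add_one_le_iff.2 (sq_pos_of_ne_zero hr0)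
  rw [hdiscr, abs_mul, abs_of_nonneg (sq_nonneg (r : ℚ))]
  exact le_mul_of_one_le_left (abs_nonneg _) hr1

end NumberField

section Imaginary

variable {K : Type*} [Field K] [NumberField K] {d : ℕ} {w : 𝓞 K}

theorem exists_rat_basis_one_sqrt_neg (hd : 0 < d) (hw : w ^ 2 = -(d : 𝓞 K))
    (hK : Algebra.adjoin ℚ {(w : K)} = ⊤) :
    ∃ b : Module.Basis (Fin 2) ℚ K, b 0 = 1 ∧ b 1 = w := by
  have hnonsq : ¬ IsSquare (-(d : ℚ)) := fun h ↦
    absurd h.nonneg (not_le.2 (neg_lt_zero.2 (Nat.cast_pos.2 hd)))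
  refine exists_basis_one_sqrt ?_ hnonsq hK
  simpa using congrArg (algebraMap (𝓞 K) K) hw

variable (hd : 0 < d) (hw : w ^ 2 = -(d : 𝓞 K)) (hK : Algebra.adjoin ℚ {(w : K)} = ⊤)
include hd hw hK

theorem finrank_eq_two_of_sqrt_neg : Module.finrank ℚ K = 2 := by
  obtain ⟨b, -, -⟩ := exists_rat_basis_one_sqrt_neg hd hw hK
  simpa using Module.finrank_eq_card_basis b

theorem norm_rat_add_mul_sqrt_neg (u v : ℚ) :
    Algebra.norm ℚ (algebraMap ℚ K u + algebraMap ℚ K v * w) = u ^ 2 + d * v ^ 2 := by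
  obtain ⟨b, h0, h1⟩ := exists_rat_basis_one_sqrt_neg hd hw hK
  have hsq : (w : K) ^ 2 = algebraMap ℚ K (-d) := by
    simpa using congrArg (algebraMap (𝓞 K) K) hw
  rw [norm_algebraMap_add_algebraMap_mul_sqrt hsq h0 h1]
  ring

theorem exists_norm_eq_sq_add_mul_sq (x : K) :
    ∃ u v : ℚ, Algebra.norm ℚ x = u ^ 2 + d * v ^ 2 := by
  obtain ⟨b, h0, h1⟩ := exists_rat_basis_one_sqrt_neg hd hw hK
  refine ⟨b.repr x 0, b.repr x 1, ?_⟩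
  rw [← norm_rat_add_mul_sqrt_neg hd hw hK]
  conv_lhs => rw [← b.sum_repr x]
  simp [h0, h1, Algebra.smul_def]

theorem norm_int_add_mul_sqrt_neg (a b : ℤ) :
    Algebra.norm ℤ (a + b * w) = a ^ 2 + d * b ^ 2 := by
  have hnorm := norm_rat_add_mul_sqrt_neg hd hw hK a b
  rw [← @Int.cast_inj ℚ, Algebra.coe_norm_int]
  simpa using hnorm

theorem absNorm_span_natCast_eq_sq (n : ℕ) :
    Ideal.absNorm (Ideal.span {(n : 𝓞 K)}) = n ^ 2 := by
  rw [Ideal.absNorm_span_natCast, RingOfIntegers.rank, finrank_eq_two_of_sqrt_neg hd hw hK]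

theorem absNorm_span_singleton_eq_norm (x : 𝓞 K) :
    (Ideal.absNorm (Ideal.span {x}) : ℚ) = Algebra.norm ℚ (x : K) := by
  obtain ⟨u, v, huv⟩ := exists_norm_eq_sq_add_mul_sq hd hw hK (x : K)
  rw [Ideal.absNorm_span_singleton, Nat.cast_natAbs, Int.cast_abs, Algebra.coe_norm_int, huv,
    abs_of_nonneg (by positivity)]

theorem exists_absNorm_eq_sq_add_mul_sq_of_isSquare {I : (Ideal (𝓞 K))⁰}
    (hI : IsSquare (ClassGroup.mk0 I)) :
    ∃ u v : ℚ, (Ideal.absNorm (I : Ideal (𝓞 K)) : ℚ) = u ^ 2 + d * v ^ 2 := by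
  obtain ⟨C, hC⟩ := hI
  obtain ⟨J, rfl⟩ := ClassGroup.mk0_surjective C
  rw [← map_mul, ClassGroup.mk0_eq_mk0_iff] at hC
  obtain ⟨x, y, hx, -, hxy⟩ := hC
  set n := Ideal.absNorm (J : Ideal (𝓞 K)) with hn
  have hx' : (x : K) ≠ 0 := by simpa using hx
  have hnorm : Algebra.norm ℚ (x : K) * Ideal.absNorm (I : Ideal (𝓞 K)) =
      Algebra.norm ℚ (y : K) * n ^ 2 := by
    rw [← absNorm_span_singleton_eq_norm hd hw hK, ← absNorm_span_singleton_eq_norm hd hw hK]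
    exact_mod_cast (by simpa [sq, hn] using congrArg Ideal.absNorm hxy)
  have hnorm_n : Algebra.norm ℚ (n : K) = (n : ℚ) ^ 2 := by
    simpa using norm_rat_add_mul_sqrt_neg hd hw hK n 0
  obtain ⟨u, v, huv⟩ := exists_norm_eq_sq_add_mul_sq hd hw hK ((y : K) * n / x)
  refine ⟨u, v, ?_⟩
  rw [← huv]
  refine mul_left_cancel₀ (Algebra.norm_ne_zero_iff.2 hx') ?_
  rw [← map_mul, mul_div_cancel₀ _ hx', map_mul, hnorm_n, hnorm]

theorem absNorm_emod_four_eq_one_of_isSquare (hd4 : d % 4 = 1) {I : (Ideal (𝓞 K))⁰}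
    (hodd : Odd (Ideal.absNorm (I : Ideal (𝓞 K)))) (hI : IsSquare (ClassGroup.mk0 I)) :
    Ideal.absNorm (I : Ideal (𝓞 K)) % 4 = 1 := by
  obtain ⟨u, v, huv⟩ := exists_absNorm_eq_sq_add_mul_sq_of_isSquare hd hw hK hI
  have hmod := emod_four_eq_one_of_eq_rat_sq_add_mul_sq (d := d) (by omega)
    ((Int.odd_coe_nat _).2 hodd) (u := u) (v := v) (by exact_mod_cast huv)
  exact_mod_cast hmod

theorem abs_discr_le_four_mul : |(discr K : ℝ)| ≤ 4 * d := by
  obtain ⟨b, h0, h1⟩ := exists_rat_basis_one_sqrt_neg hd hw hK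
  have hsq : (w : K) ^ 2 = algebraMap ℚ K (-d) := by
    simpa using congrArg (algebraMap (𝓞 K) K) hw
  have hint : ∀ i, IsIntegral ℤ (b i) := by
    rw [Fin.forall_fin_two, h0, h1]
    exact ⟨isIntegral_one, w.isIntegral_coe⟩
  have hle := abs_discr_le_abs_discr_of_isIntegral b hint
  rw [discr_basis_one_sqrt hsq h0 h1, mul_neg, abs_neg,
    abs_of_nonneg (by positivity : (0 : ℚ) ≤ 4 * d)] at hle
  exact_mod_cast hle

theorem exists_mk0_eq_absNorm_le (C : ClassGroup (𝓞 K)) :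
    ∃ I : (Ideal (𝓞 K))⁰, ClassGroup.mk0 I = C ∧
      (Ideal.absNorm (I : Ideal (𝓞 K)) : ℝ) ≤ 4 / Real.pi * √d := by
  obtain ⟨I, hIC, hI⟩ := exists_ideal_in_class_of_norm_le C
  refine ⟨I, hIC, hI.trans ?_⟩
  have hrank := finrank_eq_two_of_sqrt_neg hd hw hK
  have hplaces : InfinitePlace.nrComplexPlaces K ≤ 1 := by
    have := InfinitePlace.card_add_two_mul_card_eq_rank K
    omega
  have hpi : 1 ≤ 4 / Real.pi := (one_le_div Real.pi_pos).2 Real.pi_le_four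
  have hdiscr : √|(discr K : ℝ)| ≤ 2 * √d := by
    refine Real.sqrt_le_iff.2 ⟨by positivity, ?_⟩
    rw [mul_pow, Real.sq_sqrt d.cast_nonneg]
    linarith [abs_discr_le_four_mul hd hw hK]
  have hfactorial : (Nat.factorial 2 : ℝ) / (2 : ℕ) ^ 2 = 1 / 2 := by norm_num
  rw [hrank, hfactorial]
  calc (4 / Real.pi) ^ InfinitePlace.nrComplexPlaces K * (1 / 2 * √|(discr K : ℝ)|)
      ≤ (4 / Real.pi) ^ 1 * (1 / 2 * (2 * √d)) := by gcongr
    _ = 4 / Real.pi * √d := by ring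

theorem absNorm_dvd_sq_add_of_mem {P : Ideal (𝓞 K)} [hP : P.IsPrime] {p : ℕ}
    (hpP : (p : 𝓞 K) ∈ P) {s : ℤ} (hs : (p : ℤ) ∣ s ^ 2 + d) :
    (Ideal.absNorm P : ℤ) ∣ s ^ 2 + d := by
  obtain ⟨m, hm⟩ := hs
  have hmem : ((s : 𝓞 K) + (1 : ℤ) * w) * (s + (-1 : ℤ) * w) ∈ P := by
    have hfactor : ((s : 𝓞 K) + (1 : ℤ) * w) * (s + (-1 : ℤ) * w) = m * p := by
      have hm' := congrArg (Int.cast : ℤ → 𝓞 K) hm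
      push_cast at hm' ⊢
      linear_combination hm' - hw
    exact hfactor ▸ P.mul_mem_left _ hpP
  rcases hP.mem_or_mem hmem with h | h <;>
    simpa only [norm_int_add_mul_sqrt_neg hd hw hK, one_pow, neg_one_sq, mul_one]
      using Ideal.absNorm_dvd_norm_of_mem h

theorem absNorm_eq_of_isSquare_neg {P : Ideal (𝓞 K)} [hP : P.IsPrime] {p : ℕ} (hp : p.Prime)
    (hp2 : p ≠ 2) (hsplit : IsSquare (-d : ZMod p)) (hne : (d : ZMod p) ≠ 0)
    (hpP : (p : 𝓞 K) ∈ P) : Ideal.absNorm P = p := by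
  have hdvd : Ideal.absNorm P ∣ p ^ 2 := by
    rw [← absNorm_span_natCast_eq_sq hd hw hK]
    exact Ideal.absNorm_dvd_absNorm_of_le ((Ideal.span_singleton_le_iff_mem _).2 hpP)
  obtain ⟨k, hk, hPk⟩ := (Nat.dvd_prime_pow hp).1 hdvd
  have hk0 : k ≠ 0 := by
    rintro rfl
    exact hP.ne_top (Ideal.absNorm_eq_one_iff.1 (by simpa using hPk))
  have hk2 : k ≠ 2 := by
    rintro rfl
    -- `p²` would divide both `s² + d` and `(s + p)² + d`, although `p ∤ s`.
    obtain ⟨s, hs, hps⟩ := exists_dvd_sq_add_and_not_dvd_of_isSquare_neg (d := d)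
      (by simpa using hsplit) (by simpa using hne)
    have hsp : (p : ℤ) ∣ (s + p) ^ 2 + d := by
      rw [show (s + p) ^ 2 + d = s ^ 2 + d + p * (2 * s + p) by ring]
      exact dvd_add hs (dvd_mul_right _ _)
    refine hps (dvd_of_sq_dvd_sq_add_of_sq_dvd_sq_add hp hp2 (d := d) ?_ ?_) <;>
      rw [← Nat.cast_pow, ← hPk]
    exacts [absNorm_dvd_sq_add_of_mem hd hw hK hpP hs, absNorm_dvd_sq_add_of_mem hd hw hK hpP hsp]
  obtain rfl : k = 1 := by omega
  simpa using hPk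

end Imaginary

section SqrtNegSeventeen

section Ring

variable {R : Type*} [CommRing R] {w : R} (hw : w ^ 2 = -17)
include hw

theorem span_two_one_add_mul_self :
    Ideal.span {2, 1 + w} * Ideal.span {2, 1 + w} = Ideal.span {2} :=
  span_pair_mul_span_pair_eq_span_singleton (m := w - 8) (α := 9 + 4 * w) (β := 0) (γ := w)
    (by linear_combination hw) (by linear_combination hw)

theorem span_three_one_add_mul_span_three_one_sub :
    Ideal.span {3, 1 + w} * Ideal.span {3, 1 - w} = Ideal.span {3} :=
  span_pair_mul_span_pair_eq_span_singleton (m := 6) (α := 1) (β := -1) (γ := 0)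
    (by linear_combination -hw) (by ring)

theorem span_two_one_add_mul_span_three_one_add_mul_self :
    Ideal.span {2, 1 + w} * (Ideal.span {3, 1 + w} * Ideal.span {3, 1 + w}) =
      Ideal.span {1 + w} := by
  have h9 : Ideal.span {3, 1 + w} * Ideal.span {3, 1 + w} = Ideal.span {3 * 3, 1 + w} :=
    span_pair_mul_span_pair_eq_span_pair (y := 1 - w) (m := 2) (α := 1) (β := 0) (γ := -1)
      (by linear_combination -hw) (by ring)
  have h18 : Ideal.span {2, 1 + w} * Ideal.span {3 * 3, 1 + w} =
      Ideal.span {2 * (3 * 3), 1 + w} :=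
    span_pair_mul_span_pair_eq_span_pair (y := 1 - w) (m := 1) (α := -4) (β := 1) (γ := 0)
      (by linear_combination -hw) (by ring)
  rw [h9, h18]
  exact Submodule.span_insert_eq_span
    (Ideal.mem_span_singleton.2 ⟨1 - w, by linear_combination hw⟩)

theorem span_three_le_of_three_mem {I : Ideal R} [hI : I.IsPrime] (h3 : (3 : R) ∈ I) :
    Ideal.span {3, 1 + w} ≤ I ∨ Ideal.span {3, 1 - w} ≤ I := by
  have hmem : (1 + w) * (1 - w) ∈ I := by
    rw [show (1 + w) * (1 - w) = 6 * 3 by linear_combination -hw]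
    exact I.mul_mem_left 6 h3
  refine (hI.mem_or_mem hmem).imp ?_ ?_ <;>
    exact fun h ↦ Ideal.span_le.2 (Set.pair_subset h3 h)

end Ring

variable {K : Type*} [Field K] [NumberField K] {w : 𝓞 K} (hw : w ^ 2 = -17)
include hw

theorem absNorm_ne_five (I : Ideal (𝓞 K)) : Ideal.absNorm I ≠ 5 := fun hI ↦ by
  have hsq : IsSquare ((-17 : ℤ) : ZMod 5) := by
    refine isSquare_zmod_of_card_quotient_eq Nat.prime_five (I := I) (x := w) ?_ (by simpa)
    rwa [← Submodule.cardQuot_apply, ← Ideal.absNorm_apply]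
  revert hsq
  decide

theorem isSquare_mk0_span_two_one_add {Q T : (Ideal (𝓞 K))⁰}
    (hQ : (Q : Ideal (𝓞 K)) = Ideal.span {2, 1 + w})
    (hT : (T : Ideal (𝓞 K)) = Ideal.span {3, 1 + w}) : IsSquare (ClassGroup.mk0 Q) := by
  have hone : ClassGroup.mk0 Q * (ClassGroup.mk0 T * ClassGroup.mk0 T) = 1 := by
    rw [← map_mul, ← map_mul, ClassGroup.mk0_eq_one_iff]
    refine ⟨1 + w, ?_⟩
    simp [hQ, hT, span_two_one_add_mul_span_three_one_add_mul_self hw]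
  exact ⟨(ClassGroup.mk0 T)⁻¹, by rw [eq_inv_of_mul_eq_one_left hone, mul_inv]⟩

variable (hK : Algebra.adjoin ℚ {(w : K)} = ⊤)
include hK

theorem absNorm_span_two_one_add : Ideal.absNorm (Ideal.span {2, 1 + w}) = 2 := by
  have hnorm := absNorm_span_natCast_eq_sq (d := 17) (by norm_num) hw hK 2
  rw [Nat.cast_ofNat, ← span_two_one_add_mul_self hw, map_mul, ← sq] at hnorm
  exact Nat.pow_left_injective two_ne_zero hnorm

theorem absNorm_span_three_one_add : Ideal.absNorm (Ideal.span {3, 1 + w}) = 3 := by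
  have hnorm : Ideal.absNorm (Ideal.span {1 + w}) = 18 := by
    have := norm_int_add_mul_sqrt_neg (d := 17) (by norm_num) hw hK 1 1
    rw [Int.cast_one, one_mul] at this
    rw [Ideal.absNorm_span_singleton, this]
    rfl
  rw [← span_two_one_add_mul_span_three_one_add_mul_self hw, map_mul, map_mul,
    absNorm_span_two_one_add hw hK] at hnorm
  nlinarith

theorem absNorm_span_three_one_sub : Ideal.absNorm (Ideal.span {3, 1 - w}) = 3 := by
  have hnorm := absNorm_span_natCast_eq_sq (d := 17) (by norm_num) hw hK 3
  rw [Nat.cast_ofNat, ← span_three_one_add_mul_span_three_one_sub hw, map_mul,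
    absNorm_span_three_one_add hw hK] at hnorm
  omega

theorem isSquare_mk0_of_absNorm_dvd_four {Q T : (Ideal (𝓞 K))⁰}
    (hQ : (Q : Ideal (𝓞 K)) = Ideal.span {2, 1 + w})
    (hT : (T : Ideal (𝓞 K)) = Ideal.span {3, 1 + w})
    {I : (Ideal (𝓞 K))⁰} (hI : Ideal.absNorm (I : Ideal (𝓞 K)) ∣ 4) :
    IsSquare (ClassGroup.mk0 I) := by
  have hQprime : (Q : Ideal (𝓞 K)).IsPrime := by
    refine Ideal.isPrime_of_irreducible_absNorm ?_
    rw [hQ, absNorm_span_two_one_add hw hK]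
    exact Nat.prime_two
  have hQ4 : (Q : Ideal (𝓞 K)) ^ 4 = Ideal.span {4} := by
    rw [show 4 = 2 * 2 from rfl, pow_mul, sq (Q : Ideal (𝓞 K)), hQ, span_two_one_add_mul_self hw,
      Ideal.span_singleton_pow]
    norm_num
  have hdvd : (I : Ideal (𝓞 K)) ∣ (Q : Ideal (𝓞 K)) ^ 4 := by
    rw [hQ4, Ideal.dvd_span_singleton]
    exact_mod_cast Ideal.mem_of_dvd _ (Nat.cast_dvd_cast hI) (Ideal.absNorm_mem _)
  obtain ⟨i, hi⟩ := exists_mk0_eq_pow_of_dvd hQprime hdvd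
  exact hi ▸ (isSquare_mk0_span_two_one_add hw hQ hT).pow i

theorem isSquare_mk0_mul_mk0_of_absNorm_eq_three {I T : (Ideal (𝓞 K))⁰}
    (hT : (T : Ideal (𝓞 K)) = Ideal.span {3, 1 + w})
    (hI : Ideal.absNorm (I : Ideal (𝓞 K)) = 3) :
    IsSquare (ClassGroup.mk0 I * ClassGroup.mk0 T) := by
  have hprime : (I : Ideal (𝓞 K)).IsPrime :=
    Ideal.isPrime_of_irreducible_absNorm (hI ▸ Nat.prime_three)
  have h3 : (3 : 𝓞 K) ∈ (I : Ideal (𝓞 K)) := by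
    simpa [hI] using Ideal.absNorm_mem (I : Ideal (𝓞 K))
  rcases span_three_le_of_three_mem hw h3 with hle | hle
  · have hIT : I = T := Subtype.ext <| hT ▸ (eq_of_le_of_absNorm_eq hle
      ((absNorm_span_three_one_add hw hK).trans hI.symm) (hI.trans_ne three_ne_zero)).symm
    exact ⟨ClassGroup.mk0 T, by rw [hIT]⟩
  · have hIT := eq_of_le_of_absNorm_eq hle
      ((absNorm_span_three_one_sub hw hK).trans hI.symm) (hI.trans_ne three_ne_zero)
    have hone : ClassGroup.mk0 I * ClassGroup.mk0 T = 1 := by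
      rw [mul_comm, ← map_mul, ClassGroup.mk0_eq_one_iff]
      refine ⟨3, ?_⟩
      simp [← hIT, hT, span_three_one_add_mul_span_three_one_sub hw]
    exact hone ▸ IsSquare.one

theorem isSquare_or_isSquare_mul_of_absNorm_le_five {Q T : (Ideal (𝓞 K))⁰}
    (hQ : (Q : Ideal (𝓞 K)) = Ideal.span {2, 1 + w})
    (hT : (T : Ideal (𝓞 K)) = Ideal.span {3, 1 + w})
    (I : (Ideal (𝓞 K))⁰) (hI : Ideal.absNorm (I : Ideal (𝓞 K)) ≤ 5) :
    IsSquare (ClassGroup.mk0 I) ∨ IsSquare (ClassGroup.mk0 I * ClassGroup.mk0 T) := by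
  have hI0 := Ideal.absNorm_ne_zero_of_nonZeroDivisors I
  have hI5 := absNorm_ne_five hw (I : Ideal (𝓞 K))
  by_cases h3 : Ideal.absNorm (I : Ideal (𝓞 K)) = 3
  · exact .inr (isSquare_mk0_mul_mk0_of_absNorm_eq_three hw hK hT h3)
  · have hdvd : Ideal.absNorm (I : Ideal (𝓞 K)) ∣ 4 := by
      generalize Ideal.absNorm (I : Ideal (𝓞 K)) = n at hI hI0 hI5 h3 ⊢
      interval_cases n <;> omega
    exact .inl (isSquare_mk0_of_absNorm_dvd_four hw hK hQ hT hdvd)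

theorem exists_absNorm_eq_three_forall_isSquare_or_isSquare_mul : ∃ T : (Ideal (𝓞 K))⁰,
    Ideal.absNorm (T : Ideal (𝓞 K)) = 3 ∧
      ∀ C : ClassGroup (𝓞 K), IsSquare C ∨ IsSquare (C * ClassGroup.mk0 T) := by
  have hQ := absNorm_span_two_one_add hw hK
  have hT := absNorm_span_three_one_add hw hK
  have hQ0 := Ideal.absNorm_ne_zero_iff_mem_nonZeroDivisors.1 (hQ.trans_ne two_ne_zero)
  have hT0 := Ideal.absNorm_ne_zero_iff_mem_nonZeroDivisors.1 (hT.trans_ne three_ne_zero)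
  refine ⟨⟨_, hT0⟩, hT, fun C ↦ ?_⟩
  obtain ⟨I, rfl, hI⟩ := exists_mk0_eq_absNorm_le (d := 17) (by norm_num) hw hK C
  have hbound : 4 / Real.pi * √(17 : ℕ) < 6 := by
    have hsqrt : √(17 : ℕ) < 4.5 := (Real.sqrt_lt' (by norm_num)).2 (by norm_num)
    have hpi := Real.pi_gt_three
    calc 4 / Real.pi * √(17 : ℕ) ≤ 4 / 3 * √(17 : ℕ) := by gcongr
      _ < 4 / 3 * 4.5 := by gcongr
      _ = 6 := by norm_num
  have hI6 : Ideal.absNorm (I : Ideal (𝓞 K)) < 6 := by exact_mod_cast hI.trans_lt hbound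
  exact isSquare_or_isSquare_mul_of_absNorm_le_five hw hK (Q := ⟨_, hQ0⟩) (T := ⟨_, hT0⟩)
    rfl rfl I (by omega)

end SqrtNegSeventeen

theorem exists_ringOfIntegers_sq_eq_neg_seventeen {K : Type*} [Field K] {ω : K}
    (hω : ω ^ 2 = -17) : ∃ w : 𝓞 K, (w : K) = ω ∧ w ^ 2 = -17 := by
  have hint : IsIntegral ℤ ω := ⟨Polynomial.X ^ 2 + 17, by monicity!, by simp [hω]⟩
  refine ⟨⟨ω, hint⟩, rfl, RingOfIntegers.coe_injective ?_⟩
  exact (map_pow _ _ _).trans (hω.trans (by rw [map_neg, map_ofNat]))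

theorem class_of_prime_above_split_prime_isSquare_iff_general
    (K : Type*) [Field K] [NumberField K] (ω : K)
    (hω : ω ^ 2 = -17) (hK : Algebra.adjoin ℚ {ω} = ⊤)
    (I : (Ideal (𝓞 K))⁰) (hI : Odd (Ideal.absNorm (I : Ideal (𝓞 K)))) :
    IsSquare (ClassGroup.mk0 I) ↔ Ideal.absNorm (I : Ideal (𝓞 K)) % 4 = 1 := by
  obtain ⟨w, rfl, hw⟩ := exists_ringOfIntegers_sq_eq_neg_seventeen hω
  have hmod {J : (Ideal (𝓞 K))⁰} (hJ : Odd (Ideal.absNorm (J : Ideal (𝓞 K)))) :=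
    absNorm_emod_four_eq_one_of_isSquare (d := 17) (by norm_num) hw hK rfl hJ
  refine ⟨hmod hI, fun hI4 ↦ ?_⟩
  obtain ⟨T, hT, hclass⟩ := exists_absNorm_eq_three_forall_isSquare_or_isSquare_mul hw hK
  refine (hclass (ClassGroup.mk0 I)).resolve_right fun hIT ↦ ?_
  have hIT_norm : Ideal.absNorm ((I * T : (Ideal (𝓞 K))⁰) : Ideal (𝓞 K)) =
      Ideal.absNorm (I : Ideal (𝓞 K)) * 3 := by rw [Submonoid.coe_mul, map_mul, hT]
  have hIT4 := hmod (hIT_norm ▸ hI.mul (by decide)) (by rwa [map_mul])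
  omega

/-- For an odd prime `p ≠ 17` which splits in `K = ℚ(√−17)` (i.e. `-17` is a nonzero square
mod `p`), the class of any prime of `𝓞_K` above `p` is a square in `Cl(K)` iff `p ≡ 1 (mod 4)`. -/
theorem class_of_prime_above_split_prime_isSquare_iff
    (K : Type*) [Field K] [NumberField K] (ω : K)
    (hω : ω ^ 2 = -17) (hK : Algebra.adjoin ℚ {ω} = ⊤)
    (p : ℕ) (hp : p.Prime) (hodd : p ≠ 2) (h17 : p ≠ 17)
    (hsplit : IsSquare (-17 : ZMod p)) (hne : (-17 : ZMod p) ≠ 0) :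
    ∀ (P : Ideal (𝓞 K)) (hP0 : P ∈ (Ideal (𝓞 K))⁰), P.IsPrime → (p : 𝓞 K) ∈ P →
      (IsSquare (ClassGroup.mk0 ⟨P, hP0⟩) ↔ p % 4 = 1) := by
  intro P hP0 hP hpP
  obtain ⟨w, rfl, hw⟩ := exists_ringOfIntegers_sq_eq_neg_seventeen hω
  have hnorm : Ideal.absNorm P = p :=
    absNorm_eq_of_isSquare_neg (d := 17) (by norm_num) hw hK hp hodd hsplit
      (neg_ne_zero.1 hne) hpP
  have hiff := class_of_prime_above_split_prime_isSquare_iff_general K w hω hK ⟨P, hP0⟩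
    (hnorm.symm ▸ hp.odd_of_ne_two hodd)
  rwa [hnorm] at hiff
end

section
/- Let p be an odd rational prime with p ≠ 17. There exists a prime ideal 𝔭 of 𝓞_K above p (i.e., with p ∈ 𝔭) whose ideal class has order 4 in Cl(K) if and only if p ≡ 3 (mod 4) and p mod 17 ∈ {3, 5, 6, 7, 10, 11, 12, 14}. -/
open NumberField nonZeroDivisors

/-!
By quadratic reciprocity and the splitting law, the right-hand side says that `p` has a prime `P` of
norm `p` and that `p` is not a square modulo `17`. Viewing the ideal `P = (p, a + θ)`, where
`θ = √-17`, as a binary quadratic form and reducing that form produces an ideal `Q` in the inverse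
class of `P` with `N(Q) ≤ 4` and `N(Q) p = x² + 17 y²`, so that modulo `17` the residue `p` is a
square exactly when `N(Q)` is, i.e. when `N(Q) ≠ 3`. Ideals of `2`-power norm are powers of
`(2, 1 + θ)`, whose square is `(2)`. An ideal of norm `3` has order `4`: its square is inverse to an
ideal of norm `2`, as `1 ± θ` has norm `18`, and `2` is not of the form `x² + 17 y²`.
-/

namespace QuadraticNumberField

theorem exists_intCast_eq_of_squarefree_mul_sq {d m : ℤ} (hd : Squarefree d) {q : ℚ}
    (h : d * q ^ 2 = m) : ∃ b : ℤ, (b : ℚ) = q := by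
  refine ⟨q.num, (Rat.den_eq_one_iff q).1 ?_⟩
  have hmul : d * q.num ^ 2 = m * (q.den : ℤ) ^ 2 := by
    have hq : q * q.den = q.num := Rat.mul_den_eq_num q
    have : (d * q.num ^ 2 : ℚ) = m * q.den ^ 2 := by rw [← hq, ← h]; ring
    exact_mod_cast this
  have hcop : IsCoprime ((q.den : ℤ) ^ 2) (q.num ^ 2) :=
    (Int.isCoprime_iff_nat_coprime.2 (by simpa using q.reduced.symm)).pow
  have hdvd : (q.den : ℤ) * q.den ∣ d :=
    sq (q.den : ℤ) ▸ hcop.dvd_of_dvd_mul_right ⟨m, by rw [hmul, mul_comm]⟩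
  simpa [Int.isUnit_iff_natAbs_eq] using hd _ hdvd

theorem even_and_even_of_four_dvd_sq_sub_mul_sq {a b d : ℤ} (hd4 : d % 4 = 2 ∨ d % 4 = 3)
    (h : 4 ∣ a ^ 2 - d * b ^ 2) : Even a ∧ Even b := by
  have hcases : ∀ a b d : ZMod 4, (d = 2 ∨ d = 3) → a ^ 2 - d * b ^ 2 = 0 →
      (a = 0 ∨ a = 2) ∧ (b = 0 ∨ b = 2) := by decide
  have hmod : ∀ z r : ℤ, (z : ZMod 4) = r ↔ z % 4 = r % 4 := fun z r ↦
    ZMod.intCast_eq_intCast_iff' z r 4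
  have hd : (d : ZMod 4) = (2 : ℤ) ∨ (d : ZMod 4) = (3 : ℤ) := by rwa [hmod, hmod]
  have h0 : (a : ZMod 4) ^ 2 - d * b ^ 2 = 0 := by
    exact_mod_cast (ZMod.intCast_zmod_eq_zero_iff_dvd _ 4).2 h
  obtain ⟨ha, hb⟩ := hcases a b d (by exact_mod_cast hd) h0
  have ha' : a % 4 = 0 % 4 ∨ a % 4 = 2 % 4 := by rw [← hmod, ← hmod]; exact_mod_cast ha
  have hb' : b % 4 = 0 % 4 ∨ b % 4 = 2 % 4 := by rw [← hmod, ← hmod]; exact_mod_cast hb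
  exact ⟨Int.even_iff.2 (by omega), Int.even_iff.2 (by omega)⟩

theorem not_isSquare_of_mod_four {d : ℤ} (hd4 : d % 4 = 2 ∨ d % 4 = 3) : ¬ IsSquare d := by
  rintro ⟨m, rfl⟩
  rcases Int.even_or_odd' m with ⟨n, rfl | rfl⟩ <;> ring_nf at hd4 <;> omega

theorem squarefree_neg_natCast {q : ℕ} (hq : q.Prime) : Squarefree (-q : ℤ) :=
  (Nat.prime_iff_prime_int.1 hq).neg.squarefree

/-- Lagrange's reduction: reduce `B` modulo `A`, then exchange the outer coefficients. -/
theorem exists_pos_value_sq_le {D : ℤ} (hD : 0 < D) (A : ℕ) :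
    ∀ B C : ℤ, 0 < A → A * C - B ^ 2 = D →
      ∃ x y : ℤ, 0 < A * x ^ 2 + 2 * B * x * y + C * y ^ 2 ∧
        3 * (A * x ^ 2 + 2 * B * x * y + C * y ^ 2) ^ 2 ≤ 4 * D := by
  induction A using Nat.strong_induction_on with
  | _ A ih =>
    intro B C hA h
    by_cases hsmall : 3 * (A : ℤ) ^ 2 ≤ 4 * D
    · exact ⟨1, 0, by simpa using hA, by simpa using hsmall⟩
    have hA' : (0 : ℤ) < A := by exact_mod_cast hA
    obtain ⟨t, B', rfl, hB'⟩ : ∃ t B' : ℤ, B = A * t + B' ∧ 4 * B' ^ 2 ≤ (A : ℤ) ^ 2 := by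
      refine ⟨B.bdiv A, B.bmod A, (Int.bdiv_add_bmod B A).symm, ?_⟩
      have hlo := Int.le_bmod (x := B) hA
      have hhi := Int.bmod_le (x := B) hA
      nlinarith [show 0 ≤ A + 2 * B.bmod A by omega, show 0 ≤ A - 2 * B.bmod A by omega]
    set C' : ℤ := C - 2 * t * B' - A * t ^ 2 with hC'
    have h' : A * C' - B' ^ 2 = D := by rw [← h, hC']; ring
    have hC'pos : 0 < C' := pos_of_mul_pos_right (by nlinarith [sq_nonneg B']) hA'.le
    have hC'lt : C' < A := lt_of_mul_lt_mul_left (by nlinarith) hA'.le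
    lift C' to ℕ using hC'pos.le with n hn
    obtain ⟨x, y, hpos, hle⟩ :=
      ih n (by exact_mod_cast hC'lt) (-B') A (by exact_mod_cast hC'pos) (by rw [← h']; ring)
    have hval : A * (y + t * x) ^ 2 + 2 * (A * t + B') * (y + t * x) * (-x) + C * (-x) ^ 2
        = n * x ^ 2 + 2 * -B' * x * y + A * y ^ 2 := by
      rw [hC']; ring
    exact ⟨y + t * x, -x, hval ▸ hpos, hval ▸ hle⟩

theorem isSquare_neg_prime_iff {p q : ℕ} [Fact p.Prime] [Fact q.Prime] (hp : p ≠ 2)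
    (hq : q % 4 = 1) (hns : ¬ IsSquare (p : ZMod q)) :
    IsSquare (-q : ZMod p) ↔ p % 4 = 3 := by
  have hnsq : ¬ IsSquare (q : ZMod p) :=
    (ZMod.exists_sq_eq_prime_iff_of_mod_four_eq_one hq hp).not.1 hns
  have hneg : IsSquare (-q : ZMod p) ↔ ¬ IsSquare (-1 : ZMod p) := by
    have hq0 : (-q : ZMod p) ≠ 0 := neg_ne_zero.2 fun h ↦ hnsq (h ▸ IsSquare.zero)
    rw [← quadraticChar_one_iff_isSquare hq0, neg_eq_neg_one_mul, map_mul,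
      quadraticChar_neg_one_iff_not_isSquare.2 hnsq, ← quadraticChar_neg_one_iff_not_isSquare]
    omega
  rw [hneg, ZMod.exists_sq_eq_neg_one_iff, not_not]

section Field

variable {F K : Type*} [Field F] [Field K] [Algebra F K] {ω : K} {d : F}

/-- The model `F[X] / (X² - d)` of the quadratic extension generated by a square root `ω` of the
nonsquare `d`, with the formal root sent to `ω`; norms and degrees are computed in the model. -/
noncomputable def quadraticAlgEquiv (hω : ω ^ 2 = algebraMap F K d) (hd : ¬ IsSquare d)
    (hK : Algebra.adjoin F {ω} = ⊤) : QuadraticAlgebra F d 0 ≃ₐ[F] K :=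
  haveI : Fact (∀ r : F, r ^ 2 ≠ d + 0 * r) :=
    ⟨fun r hr ↦ hd ⟨r, by rw [← sq, hr, zero_mul, add_zero]⟩⟩
  AlgEquiv.ofBijective
    (QuadraticAlgebra.lift ⟨ω, by rw [← sq, hω, zero_smul, add_zero, Algebra.smul_def, mul_one]⟩)
    ⟨RingHom.injective _, by
      rw [← AlgHom.range_eq_top, eq_top_iff, ← hK]
      exact Algebra.adjoin_le (by rintro _ rfl; exact ⟨QuadraticAlgebra.omega, by simp⟩)⟩

theorem quadraticAlgEquiv_apply (hω : ω ^ 2 = algebraMap F K d) (hd : ¬ IsSquare d)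
    (hK : Algebra.adjoin F {ω} = ⊤) (z : QuadraticAlgebra F d 0) :
    quadraticAlgEquiv hω hd hK z = algebraMap F K z.re + algebraMap F K z.im * ω := by
  simp [quadraticAlgEquiv, QuadraticAlgebra.lift, Algebra.smul_def]

theorem norm_algebraMap_add_mul (hω : ω ^ 2 = algebraMap F K d) (hd : ¬ IsSquare d)
    (hK : Algebra.adjoin F {ω} = ⊤) (u v : F) :
    Algebra.norm F (algebraMap F K u + algebraMap F K v * ω) = u ^ 2 - d * v ^ 2 := by
  rw [← quadraticAlgEquiv_apply hω hd hK ⟨u, v⟩, Algebra.norm_eq_of_algEquiv]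
  refine (QuadraticAlgebra.det_toLinearMap_eq_norm _).trans ?_
  simp only [QuadraticAlgebra.norm_def]
  ring

theorem finrank_eq_two_of_adjoin_sqrt (hω : ω ^ 2 = algebraMap F K d) (hd : ¬ IsSquare d)
    (hK : Algebra.adjoin F {ω} = ⊤) : Module.finrank F K = 2 := by
  rw [← (quadraticAlgEquiv hω hd hK).toLinearEquiv.finrank_eq, QuadraticAlgebra.finrank_eq_two]

end Field

theorem exists_isPrime_natCast_mem {S : Type*} [CommRing S] [Algebra.IsIntegral ℤ S]
    [FaithfulSMul ℤ S] {p : ℕ} (hp : p.Prime) : ∃ P : Ideal S, P.IsPrime ∧ (p : S) ∈ P := by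
  have hpZ : (Ideal.span {(p : ℤ)}).IsPrime :=
    (Ideal.span_singleton_prime (by exact_mod_cast hp.ne_zero)).2 (Nat.prime_iff_prime_int.1 hp)
  obtain ⟨⟨P, hP, _⟩⟩ := (Ideal.span {(p : ℤ)}).nonempty_primesOver (S := S)
  refine ⟨P, hP, ?_⟩
  simpa using (P.mem_of_liesOver (Ideal.span {(p : ℤ)}) p).1 (Ideal.mem_span_singleton_self _)

section DedekindDomain

variable {S : Type*} [CommRing S] [IsDedekindDomain S] [Module.Free ℤ S] [Module.Finite ℤ S]

theorem exists_mk0_mul_mk0_eq_one {I : (Ideal S)⁰} {α : S} (hα : α ∈ (I : Ideal S)) {k : ℕ}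
    (hk : k ≠ 0) (hnorm : (Algebra.norm ℤ α).natAbs = k * Ideal.absNorm (I : Ideal S)) :
    ∃ J : (Ideal S)⁰, Ideal.absNorm (J : Ideal S) = k ∧
      ClassGroup.mk0 I * ClassGroup.mk0 J = 1 := by
  obtain ⟨J, hJ⟩ := Ideal.dvd_span_singleton.2 hα
  have hJk : Ideal.absNorm J = k := by
    rw [← Ideal.absNorm_span_singleton, hJ, map_mul, mul_comm] at hnorm
    exact Nat.eq_of_mul_eq_mul_right
      (Nat.pos_of_ne_zero (Ideal.absNorm_ne_zero_of_nonZeroDivisors I)) hnorm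
  have hJ0 : J ∈ (Ideal S)⁰ := Ideal.absNorm_ne_zero_iff_mem_nonZeroDivisors.1 (hJk ▸ hk)
  refine ⟨⟨J, hJ0⟩, hJk, ?_⟩
  rw [← map_mul]
  exact (ClassGroup.mk0_eq_one_iff (mul_mem I.2 hJ0)).2 ⟨α, hJ.symm⟩

omit [Module.Finite ℤ S] in
theorem exists_intCast_add_mem {I : Ideal S} (hI : (Ideal.absNorm I).Prime) (x : S) :
    ∃ a : ℤ, a + x ∈ I := by
  have hcard : Nat.card (S ⧸ I) = Ideal.absNorm I := by
    rw [Ideal.absNorm_apply, Submodule.cardQuot_apply]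
  have : Finite (S ⧸ I) := Nat.finite_of_card_ne_zero (hcard ▸ hI.ne_zero)
  have := Fintype.ofFinite (S ⧸ I)
  let e : ZMod (Ideal.absNorm I) ≃+* S ⧸ I :=
    ZMod.ringEquivOfPrime _ hI (by rw [← Nat.card_eq_fintype_card, hcard])
  obtain ⟨r, hr⟩ := e.surjective (Ideal.Quotient.mk I (-x))
  obtain ⟨a, rfl⟩ := ZMod.intCast_surjective r
  refine ⟨a, ?_⟩
  rw [map_intCast, ← map_intCast (Ideal.Quotient.mk I), Ideal.Quotient.eq, sub_neg_eq_add] at hr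
  exact hr

end DedekindDomain

theorem exists_coe_eq_and_sq_eq {K : Type*} [Field K] {ω : K} {d : ℤ} (hω : ω ^ 2 = d) :
    ∃ θ : 𝓞 K, (θ : K) = ω ∧ θ ^ 2 = d := by
  have hint : IsIntegral ℤ ω := IsIntegral.of_pow two_pos (hω ▸ isIntegral_algebraMap (x := d))
  obtain ⟨θ, rfl⟩ : ∃ θ : 𝓞 K, (θ : K) = ω := ⟨⟨ω, hint⟩, rfl⟩
  exact ⟨θ, rfl, RingOfIntegers.coe_injective (by simpa using hω)⟩

section RingOfIntegers

variable {K : Type*} [Field K] [NumberField K] {θ : 𝓞 K} {d : ℤ}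

theorem coe_sq_eq_algebraMap (hθ : θ ^ 2 = d) : (θ : K) ^ 2 = algebraMap ℚ K d := by
  rw [← map_pow, hθ, map_intCast, map_intCast]

theorem norm_intCast_add_mul (hθ : θ ^ 2 = d) (hd : ¬ IsSquare d)
    (hK : Algebra.adjoin ℚ {(θ : K)} = ⊤) (x y : ℤ) :
    Algebra.norm ℤ (x + y * θ) = x ^ 2 - d * y ^ 2 := by
  have hQ := norm_algebraMap_add_mul (coe_sq_eq_algebraMap hθ)
    (Rat.isSquare_intCast_iff.not.2 hd) hK x y
  have hcoe : ((x + y * θ : 𝓞 K) : K) = algebraMap ℚ K x + algebraMap ℚ K y * θ := by simp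
  rw [← hcoe, ← Algebra.coe_norm_int] at hQ
  exact_mod_cast hQ

theorem absNorm_span_natCast (hθ : θ ^ 2 = d) (hd : ¬ IsSquare d)
    (hK : Algebra.adjoin ℚ {(θ : K)} = ⊤) (n : ℕ) :
    Ideal.absNorm (Ideal.span {(n : 𝓞 K)}) = n ^ 2 := by
  rw [Ideal.absNorm_span_natCast, RingOfIntegers.rank,
    finrank_eq_two_of_adjoin_sqrt (coe_sq_eq_algebraMap hθ)
      (Rat.isSquare_intCast_iff.not.2 hd) hK]

theorem eq_zero_of_intCast_add_mul_eq_zero (hθ : θ ^ 2 = d) (hd : ¬ IsSquare d) {x y : ℤ}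
    (h : (x + y * θ : 𝓞 K) = 0) : y = 0 := by
  by_contra hy
  have hsq : x ^ 2 = d * y ^ 2 := by
    have : (x ^ 2 : 𝓞 K) = d * y ^ 2 := by linear_combination (x - y * θ) * h + y ^ 2 * hθ
    exact_mod_cast this
  obtain ⟨z, rfl⟩ : y ∣ x := (Int.pow_dvd_pow_iff two_ne_zero).1 ⟨d, by rw [hsq, mul_comm]⟩
  exact hd ⟨z, mul_right_cancel₀ (pow_ne_zero 2 hy) (by linear_combination -hsq)⟩

theorem exists_eq_intCast_add_mul (hθ : θ ^ 2 = d) (hd : Squarefree d)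
    (hd4 : d % 4 = 2 ∨ d % 4 = 3) (hK : Algebra.adjoin ℚ {(θ : K)} = ⊤) (β : 𝓞 K) :
    ∃ x y : ℤ, β = x + y * θ := by
  have hω := coe_sq_eq_algebraMap hθ
  have hdQ : ¬ IsSquare (d : ℚ) := Rat.isSquare_intCast_iff.not.2 (not_isSquare_of_mod_four hd4)
  obtain ⟨⟨u, v⟩, huv⟩ := (quadraticAlgEquiv hω hdQ hK).surjective (β : K)
  rw [quadraticAlgEquiv_apply] at huv
  have hnorm : (Algebra.norm ℤ β : ℚ) = u ^ 2 - d * v ^ 2 := by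
    rw [Algebra.coe_norm_int, ← huv, norm_algebraMap_add_mul hω hdQ hK]
  have hnorm' : (Algebra.norm ℤ (1 + β) : ℚ) = (1 + u) ^ 2 - d * v ^ 2 := by
    have hcoe : ((1 + β : 𝓞 K) : K) = algebraMap ℚ K (1 + u) + algebraMap ℚ K v * θ := by
      simp [← huv, add_assoc]
    rw [Algebra.coe_norm_int, hcoe, norm_algebraMap_add_mul hω hdQ hK]
  set n := Algebra.norm ℤ β
  obtain ⟨a, ha⟩ : ∃ a : ℤ, (a : ℚ) = 2 * u :=
    ⟨Algebra.norm ℤ (1 + β) - n - 1, by push_cast; linear_combination hnorm' - hnorm⟩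
  obtain ⟨b, hb⟩ := exists_intCast_eq_of_squarefree_mul_sq (m := a ^ 2 - 4 * n) (q := 2 * v) hd
    (by push_cast; rw [ha, hnorm]; ring)
  have h4 : a ^ 2 - d * b ^ 2 = 4 * n := by
    have : (a ^ 2 - d * b ^ 2 : ℚ) = 4 * n := by rw [ha, hb, hnorm]; ring
    exact_mod_cast this
  obtain ⟨⟨x, rfl⟩, ⟨y, rfl⟩⟩ := even_and_even_of_four_dvd_sq_sub_mul_sq hd4 ⟨n, h4⟩
  have hu : u = x := by push_cast at ha; linarith
  have hv : v = y := by push_cast at hb; linarith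
  refine ⟨x, y, RingOfIntegers.coe_injective (huv.symm.trans ?_)⟩
  simp [hu, hv]

theorem intCast_dvd_of_dvd_intCast_add_mul (hθ : θ ^ 2 = d) (hd : Squarefree d)
    (hd4 : d % 4 = 2 ∨ d % 4 = 3) (hK : Algebra.adjoin ℚ {(θ : K)} = ⊤) {m x y : ℤ}
    (h : (m : 𝓞 K) ∣ x + y * θ) : m ∣ y := by
  obtain ⟨β, hβ⟩ := h
  obtain ⟨s, t, rfl⟩ := exists_eq_intCast_add_mul hθ hd hd4 hK β
  have hzero := eq_zero_of_intCast_add_mul_eq_zero hθ (not_isSquare_of_mod_four hd4)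
    (x := x - m * s) (y := y - m * t) (by push_cast; linear_combination hβ)
  exact ⟨t, sub_eq_zero.1 hzero⟩

theorem absNorm_eq_or_eq_span (hθ : θ ^ 2 = d) (hd : ¬ IsSquare d)
    (hK : Algebra.adjoin ℚ {(θ : K)} = ⊤) {p : ℕ} (hp : p.Prime) {P : Ideal (𝓞 K)}
    [hP : P.IsPrime] (hpP : (p : 𝓞 K) ∈ P) :
    Ideal.absNorm P = p ∨ P = Ideal.span {(p : 𝓞 K)} := by
  obtain ⟨L, hL⟩ := Ideal.dvd_span_singleton.2 hpP
  have hmul : Ideal.absNorm P * Ideal.absNorm L = p ^ 2 := by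
    rw [← map_mul, ← hL, absNorm_span_natCast hθ hd hK]
  obtain ⟨i, hi, hPi⟩ := (Nat.dvd_prime_pow hp).1 (Dvd.intro _ hmul)
  interval_cases i
  · exact absurd (Ideal.absNorm_eq_one_iff.1 (by simpa using hPi)) hP.ne_top
  · exact Or.inl (by simpa using hPi)
  · right
    have hL1 : Ideal.absNorm L = 1 := by
      rw [hPi] at hmul
      exact (mul_eq_left₀ (pow_ne_zero 2 hp.ne_zero)).1 hmul
    rw [hL, Ideal.absNorm_eq_one_iff.1 hL1, Ideal.mul_top]

theorem absNorm_eq_iff_isSquare (hθ : θ ^ 2 = d) (hd : Squarefree d)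
    (hd4 : d % 4 = 2 ∨ d % 4 = 3) (hK : Algebra.adjoin ℚ {(θ : K)} = ⊤) {p : ℕ} (hp : p.Prime)
    {P : Ideal (𝓞 K)} [hP : P.IsPrime] (hpP : (p : 𝓞 K) ∈ P) :
    Ideal.absNorm P = p ↔ IsSquare (d : ZMod p) := by
  have hdsq := not_isSquare_of_mod_four hd4
  constructor
  · intro hN
    obtain ⟨a, ha⟩ := exists_intCast_add_mem (hN ▸ hp) θ
    have hdvd : (p : ℤ) ∣ a ^ 2 - d := by
      have := Ideal.absNorm_dvd_norm_of_mem ha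
      have hnorm := norm_intCast_add_mul hθ hdsq hK a 1
      rw [Int.cast_one, one_mul] at hnorm
      rw [hN, hnorm] at this
      simpa using this
    rw [← ZMod.intCast_zmod_eq_zero_iff_dvd] at hdvd
    push_cast at hdvd
    exact ⟨a, by linear_combination -hdvd⟩
  · rintro ⟨r, hr⟩
    refine (absNorm_eq_or_eq_span hθ hdsq hK hp hpP).resolve_right fun hspan ↦ ?_
    obtain ⟨a, rfl⟩ := ZMod.intCast_surjective r
    obtain ⟨c, hc⟩ : (p : ℤ) ∣ a ^ 2 - d := by
      rw [← ZMod.intCast_zmod_eq_zero_iff_dvd]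
      push_cast
      linear_combination -hr
    have hprod : (a + θ) * (a - θ) ∈ P := by
      have hc' : (a ^ 2 - d : 𝓞 K) = p * c := by exact_mod_cast congrArg (Int.cast (R := 𝓞 K)) hc
      rw [show (a + θ) * (a - θ) = c * p by linear_combination hc' - hθ]
      exact P.mul_mem_left _ hpP
    have hnot : ∀ e : ℤ, IsUnit e → (a + e * θ : 𝓞 K) ∉ P := by
      intro e he hmem
      rw [hspan, Ideal.mem_span_singleton, ← Int.cast_natCast] at hmem
      exact (Nat.prime_iff_prime_int.1 hp).not_isUnit
        (isUnit_of_dvd_unit (intCast_dvd_of_dvd_intCast_add_mul hθ hd hd4 hK hmem) he)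
    rcases hP.mem_or_mem hprod with h | h
    · exact hnot 1 isUnit_one (by simpa using h)
    · exact hnot (-1) isUnit_one.neg (by simpa [sub_eq_add_neg] using h)

theorem exists_mk0_mul_mk0_eq_one_of_neg (hθ : θ ^ 2 = d) (hd : d < 0)
    (hK : Algebra.adjoin ℚ {(θ : K)} = ⊤) {P : (Ideal (𝓞 K))⁰}
    (hP : (Ideal.absNorm (P : Ideal (𝓞 K))).Prime) :
    ∃ (Q : (Ideal (𝓞 K))⁰) (x y : ℤ), ClassGroup.mk0 P * ClassGroup.mk0 Q = 1 ∧
      x ^ 2 - d * y ^ 2 = Ideal.absNorm (Q : Ideal (𝓞 K)) * Ideal.absNorm (P : Ideal (𝓞 K)) ∧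
      3 * (Ideal.absNorm (Q : Ideal (𝓞 K)) : ℤ) ^ 2 ≤ -4 * d := by
  have hdsq : ¬ IsSquare d := fun h ↦ hd.not_ge h.nonneg
  obtain ⟨a, ha⟩ := exists_intCast_add_mem hP θ
  have hpP := Ideal.absNorm_mem (P : Ideal (𝓞 K))
  have hdvd := Ideal.absNorm_dvd_norm_of_mem (x := a + (1 : ℤ) * θ) (by simpa using ha)
  rw [norm_intCast_add_mul hθ hdsq hK, one_pow, mul_one] at hdvd
  set p := Ideal.absNorm (P : Ideal (𝓞 K))
  obtain ⟨c, hc⟩ := hdvd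
  obtain ⟨s, t, hpos, hle⟩ := exists_pos_value_sq_le (D := -d) (by omega) p a c hP.pos
    (by linear_combination -hc)
  lift p * s ^ 2 + 2 * a * s * t + c * t ^ 2 to ℕ using hpos.le with k hk
  have hxy : (p * s + a * t) ^ 2 - d * t ^ 2 = k * p := by
    rw [hk]; linear_combination t ^ 2 * hc
  have hmem : ((p * s + a * t : ℤ) + t * θ : 𝓞 K) ∈ (P : Ideal (𝓞 K)) := by
    rw [show ((p * s + a * t : ℤ) + t * θ : 𝓞 K) = s * p + t * (a + θ) by push_cast; ring]
    exact add_mem (Ideal.mul_mem_left _ _ hpP) (Ideal.mul_mem_left _ _ ha)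
  obtain ⟨Q, rfl, hPQ⟩ := exists_mk0_mul_mk0_eq_one hmem (k := k) (by omega)
    (by rw [norm_intCast_add_mul hθ hdsq hK, hxy, Int.natAbs_mul, Int.natAbs_natCast,
      Int.natAbs_natCast])
  exact ⟨Q, _, t, hPQ, hxy, by linarith⟩

theorem span_two_one_add_sq {R : Type*} [CommRing R] {θ : R} {d : ℤ} (hθ : θ ^ 2 = d)
    (hd : d % 4 = 3) : Ideal.span {2, 1 + θ} ^ 2 = Ideal.span {2} := by
  obtain ⟨c, rfl⟩ : ∃ c : ℤ, d = 4 * c + 3 := ⟨d / 4, by omega⟩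
  push_cast at hθ
  rw [sq, Ideal.span_pair_mul_span_pair]
  refine le_antisymm (Ideal.span_le.2 ?_) ((Ideal.span_singleton_le_iff_mem _).2 ?_)
  · rintro x (rfl | rfl | rfl | rfl) <;> rw [SetLike.mem_coe, Ideal.mem_span_singleton]
    · exact dvd_mul_right _ _
    · exact dvd_mul_right _ _
    · exact dvd_mul_left _ _
    · exact ⟨2 * c + 2 + θ, by linear_combination hθ⟩
  · have h2 : (1 + θ) * (1 + θ) - 2 * (1 + θ) - c * (2 * 2) = 2 := by linear_combination hθ
    refine Set.mem_of_eq_of_mem h2.symm (?_ : _ ∈ Ideal.span _)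
    exact sub_mem (sub_mem (Ideal.subset_span (by simp)) (Ideal.subset_span (by simp)))
      (Ideal.mul_mem_left _ _ (Ideal.subset_span (by simp)))

theorem mk0_sq_eq_one_of_absNorm_eq_two_pow (hθ : θ ^ 2 = d) (hd4 : d % 4 = 3)
    (hK : Algebra.adjoin ℚ {(θ : K)} = ⊤) {I : (Ideal (𝓞 K))⁰} {n : ℕ}
    (hI : Ideal.absNorm (I : Ideal (𝓞 K)) = 2 ^ n) : ClassGroup.mk0 I ^ 2 = 1 := by
  set T : Ideal (𝓞 K) := Ideal.span {2, 1 + θ}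
  have hT2 : T ^ 2 = Ideal.span {2} := span_two_one_add_sq hθ hd4
  have hNT : Ideal.absNorm T = 2 := by
    refine Nat.pow_left_injective two_ne_zero ?_
    have := absNorm_span_natCast hθ (not_isSquare_of_mod_four (Or.inr hd4)) hK 2
    rwa [Nat.cast_ofNat, ← hT2, map_pow] at this
  have hTprime : Prime T := Ideal.prime_of_isPrime
    (by rintro h; simp [h] at hNT)
    (Ideal.isPrime_of_irreducible_absNorm (hNT ▸ Nat.prime_two))
  have hdvd : (I : Ideal (𝓞 K)) ∣ T ^ (2 * n) := by
    rw [pow_mul, hT2, Ideal.span_singleton_pow, Ideal.dvd_span_singleton]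
    simpa [hI] using Ideal.absNorm_mem (I : Ideal (𝓞 K))
  obtain ⟨i, -, hi⟩ := (dvd_prime_pow hTprime _).1 hdvd
  rw [← map_pow]
  refine (ClassGroup.mk0_eq_one_iff (pow_mem I.2 2)).2 ⟨2 ^ i, ?_⟩
  rw [associated_iff_eq.1 hi, ← pow_mul, mul_comm, pow_mul, hT2, Ideal.span_singleton_pow]

theorem mk0_ne_one_of_absNorm_eq_two (hθ : θ ^ 2 = d) (hd : Squarefree d)
    (hd4 : d % 4 = 2 ∨ d % 4 = 3) (hd2 : d < -2) (hK : Algebra.adjoin ℚ {(θ : K)} = ⊤)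
    {I : (Ideal (𝓞 K))⁰} (hI : Ideal.absNorm (I : Ideal (𝓞 K)) = 2) : ClassGroup.mk0 I ≠ 1 := by
  intro h
  obtain ⟨β, hβ⟩ := (ClassGroup.mk0_eq_one_iff I.2).1 h
  obtain ⟨x, y, rfl⟩ := exists_eq_intCast_add_mul hθ hd hd4 hK β
  replace hβ : (I : Ideal (𝓞 K)) = Ideal.span {x + y * θ} := hβ
  rw [hβ, Ideal.absNorm_span_singleton,
    norm_intCast_add_mul hθ (not_isSquare_of_mod_four hd4) hK] at hI
  have hxy : x ^ 2 - d * y ^ 2 = 2 := by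
    have : 0 ≤ x ^ 2 - d * y ^ 2 := by nlinarith [sq_nonneg x, sq_nonneg y]
    omega
  have hy : y = 0 := by
    by_contra hy
    nlinarith [sq_nonneg x, Int.one_le_abs hy, sq_abs y]
  have hx : |x| < 2 := by nlinarith [sq_abs x, abs_nonneg x]
  rw [abs_lt] at hx
  obtain ⟨hx1, hx2⟩ := hx
  rw [hy] at hxy
  interval_cases x <;> omega

theorem absNorm_eq_iff_mod_four_eq_three {p q : ℕ} (hp : p.Prime) (hp2 : p ≠ 2) (hq : q.Prime)
    (hq4 : q % 4 = 1) (hns : ¬ IsSquare (p : ZMod q)) (hθ : θ ^ 2 = (-q : ℤ))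
    (hK : Algebra.adjoin ℚ {(θ : K)} = ⊤) {P : Ideal (𝓞 K)} [P.IsPrime] (hpP : (p : 𝓞 K) ∈ P) :
    Ideal.absNorm P = p ↔ p % 4 = 3 := by
  have : Fact p.Prime := ⟨hp⟩
  have : Fact q.Prime := ⟨hq⟩
  rw [absNorm_eq_iff_isSquare hθ (squarefree_neg_natCast hq) (Or.inr (by omega)) hK hp hpP,
    ← isSquare_neg_prime_iff hp2 hq4 hns, Int.cast_neg, Int.cast_natCast]

theorem exists_mk0_sq_mul_mk0_eq_one_of_absNorm_eq_three (hθ : θ ^ 2 = (-17 : ℤ))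
    (hK : Algebra.adjoin ℚ {(θ : K)} = ⊤) {Q : (Ideal (𝓞 K))⁰}
    (hQ : Ideal.absNorm (Q : Ideal (𝓞 K)) = 3) :
    ∃ R : (Ideal (𝓞 K))⁰, Ideal.absNorm (R : Ideal (𝓞 K)) = 2 ∧
      ClassGroup.mk0 Q ^ 2 * ClassGroup.mk0 R = 1 := by
  have hQprime := Ideal.isPrime_of_irreducible_absNorm (hQ ▸ Nat.prime_three)
  have h3 : (3 : 𝓞 K) ∈ (Q : Ideal (𝓞 K)) := by
    simpa [hQ] using Ideal.absNorm_mem (Q : Ideal (𝓞 K))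
  push_cast at hθ
  obtain ⟨y, hy, hα⟩ : ∃ y : ℤ, y ^ 2 = 1 ∧ 1 + y * θ ∈ (Q : Ideal (𝓞 K)) := by
    have hprod : (1 + θ) * (1 - θ) ∈ (Q : Ideal (𝓞 K)) := by
      rw [show (1 + θ) * (1 - θ) = 6 * 3 by linear_combination -hθ]
      exact Ideal.mul_mem_left _ _ h3
    rcases hQprime.mem_or_mem hprod with h | h
    · exact ⟨1, by norm_num, by simpa using h⟩
    · exact ⟨-1, by norm_num, by simpa [sub_eq_add_neg] using h⟩
  set α := 1 + y * θ with hα_def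
  have hα2 : α ^ 2 = 2 * α - 18 := by
    have hy' : (y : 𝓞 K) ^ 2 = 1 := by exact_mod_cast hy
    rw [hα_def]; linear_combination y ^ 2 * hθ - 17 * hy'
  have hαQ2 : α ∈ ((Q ^ 2 : (Ideal (𝓞 K))⁰) : Ideal (𝓞 K)) := by
    rw [SubmonoidClass.coe_pow,
      show α = α * 3 ^ 2 - 4 * α ^ 2 - 8 * 3 ^ 2 by linear_combination 4 * hα2]
    have h9 := Ideal.pow_mem_pow h3 2
    exact sub_mem (sub_mem (Ideal.mul_mem_left _ _ h9)
      (Ideal.mul_mem_left _ _ (Ideal.pow_mem_pow hα 2))) (Ideal.mul_mem_left _ _ h9)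
  have hnorm : Algebra.norm ℤ α = 18 := by
    have := norm_intCast_add_mul (d := -17) (by exact_mod_cast hθ)
      (not_isSquare_of_mod_four (Or.inr rfl)) hK 1 y
    rw [Int.cast_one] at this
    rw [this]
    linarith
  rw [← map_pow]
  exact exists_mk0_mul_mk0_eq_one hαQ2 two_ne_zero
    (by rw [hnorm, SubmonoidClass.coe_pow, map_pow, hQ]; rfl)

theorem orderOf_mk0_eq_four_of_absNorm_eq_three (hθ : θ ^ 2 = (-17 : ℤ))
    (hK : Algebra.adjoin ℚ {(θ : K)} = ⊤) {Q : (Ideal (𝓞 K))⁰}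
    (hQ : Ideal.absNorm (Q : Ideal (𝓞 K)) = 3) : orderOf (ClassGroup.mk0 Q) = 4 := by
  obtain ⟨R, hR, hQR⟩ := exists_mk0_sq_mul_mk0_eq_one_of_absNorm_eq_three hθ hK hQ
  have hR_ne : ClassGroup.mk0 R ≠ 1 := mk0_ne_one_of_absNorm_eq_two hθ
    (squarefree_neg_natCast (q := 17) (by norm_num)) (Or.inr rfl) (by norm_num) hK hR
  have hR_sq : ClassGroup.mk0 R ^ 2 = 1 :=
    mk0_sq_eq_one_of_absNorm_eq_two_pow hθ rfl hK (n := 1) hR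
  have hQ_sq : ClassGroup.mk0 Q ^ 2 = (ClassGroup.mk0 R)⁻¹ := eq_inv_of_mul_eq_one_left hQR
  refine orderOf_eq_prime_pow (p := 2) (n := 1) ?_ ?_
  · rwa [pow_one, hQ_sq, inv_eq_one]
  · rw [pow_succ, pow_one, pow_mul, hQ_sq, inv_pow, hR_sq, inv_one]

theorem mod_seventeen_mem_iff (n : ℕ) :
    n % 17 ∈ ({3, 5, 6, 7, 10, 11, 12, 14} : Finset ℕ) ↔ ¬ IsSquare (n : ZMod 17) := by
  have key : ∀ m : Fin 17, (m : ℕ) ∈ ({3, 5, 6, 7, 10, 11, 12, 14} : Finset ℕ) ↔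
      ¬ IsSquare ((m : ℕ) : ZMod 17) := by decide
  simpa using key ⟨n % 17, Nat.mod_lt _ (by norm_num)⟩

theorem isSquare_zmod_seventeen_iff_ne_three {k n : ℕ} (hn : (n : ZMod 17) ≠ 0) (hk : 0 < k)
    (hk4 : k ≤ 4) {x y : ℤ} (h : x ^ 2 + 17 * y ^ 2 = k * n) :
    IsSquare (n : ZMod 17) ↔ k ≠ 3 := by
  have hmod : (x : ZMod 17) ^ 2 = k * n := by
    have := congrArg (Int.cast (R := ZMod 17)) h
    push_cast at this
    rwa [show (17 : ZMod 17) = 0 by decide, zero_mul, add_zero] at this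
  have key : ∀ n x : ZMod 17, n ≠ 0 →
      (x ^ 2 = 1 * n → IsSquare n) ∧ (x ^ 2 = 2 * n → IsSquare n) ∧
      (x ^ 2 = 3 * n → ¬ IsSquare n) ∧ (x ^ 2 = 4 * n → IsSquare n) := by decide
  obtain ⟨h1, h2, h3, h4⟩ := key n x hn
  interval_cases k
  · simpa using h1 (by simpa using hmod)
  · simpa using h2 (by simpa using hmod)
  · simpa using h3 (by simpa using hmod)
  · simpa using h4 (by simpa using hmod)

theorem orderOf_mk0_eq_four_iff (hθ : θ ^ 2 = (-17 : ℤ)) (hK : Algebra.adjoin ℚ {(θ : K)} = ⊤)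
    {P : (Ideal (𝓞 K))⁰} {p : ℕ} (hp : p.Prime) (h17 : p ≠ 17)
    (hP : Ideal.absNorm (P : Ideal (𝓞 K)) = p) :
    orderOf (ClassGroup.mk0 P) = 4 ↔ ¬ IsSquare (p : ZMod 17) := by
  obtain ⟨Q, x, y, hPQ, hxy, hQ⟩ :=
    exists_mk0_mul_mk0_eq_one_of_neg hθ (by norm_num) hK (hP ▸ hp)
  rw [hP] at hxy
  set q := Ideal.absNorm (Q : Ideal (𝓞 K))
  have hq0 : 0 < q := Nat.pos_of_ne_zero (Ideal.absNorm_ne_zero_of_nonZeroDivisors Q)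
  have hq4 : q ≤ 4 := by
    by_contra! h
    nlinarith [show (5 : ℤ) ≤ q by exact_mod_cast h]
  have hp0 : (p : ZMod 17) ≠ 0 := by
    rw [Ne, ZMod.natCast_eq_zero_iff, Nat.prime_dvd_prime_iff_eq (by norm_num) hp]
    exact h17.symm
  rw [isSquare_zmod_seventeen_iff_ne_three hp0 hq0 hq4 (x := x) (y := y)
    (by linear_combination hxy), not_not, eq_inv_of_mul_eq_one_left hPQ, orderOf_inv]
  refine ⟨fun hord ↦ ?_, orderOf_mk0_eq_four_of_absNorm_eq_three hθ hK⟩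
  by_contra hq3
  obtain ⟨n, hn⟩ : ∃ n, q = 2 ^ n := by
    rcases (by omega : q = 1 ∨ q = 2 ∨ q = 4) with h | h | h
    exacts [⟨0, h⟩, ⟨1, h⟩, ⟨2, h⟩]
  have := orderOf_dvd_of_pow_eq_one (mk0_sq_eq_one_of_absNorm_eq_two_pow hθ rfl hK hn)
  rw [hord] at this
  omega

end RingOfIntegers

end QuadraticNumberField

open QuadraticNumberField in
/-- For an odd prime `p ≠ 17`, there is a prime of `𝓞_K` above `p` (for `K = ℚ(√−17)`) whose
ideal class has order `4` in `Cl(K)` iff `p ≡ 3 (mod 4)` and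
`p mod 17 ∈ {3, 5, 6, 7, 10, 11, 12, 14}`. -/
theorem exists_prime_above_with_class_of_order_four_iff
    (K : Type*) [Field K] [NumberField K] (ω : K)
    (hω : ω ^ 2 = -17) (hK : Algebra.adjoin ℚ {ω} = ⊤)
    (p : ℕ) (hp : p.Prime) (hodd : p ≠ 2) (h17 : p ≠ 17) :
    (∃ (P : Ideal (𝓞 K)) (hP0 : P ∈ (Ideal (𝓞 K))⁰), P.IsPrime ∧ (p : 𝓞 K) ∈ P ∧
        orderOf (ClassGroup.mk0 ⟨P, hP0⟩) = 4) ↔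
      (p % 4 = 3 ∧ p % 17 ∈ ({3, 5, 6, 7, 10, 11, 12, 14} : Finset ℕ)) := by
  obtain ⟨θ, rfl, hθ⟩ := exists_coe_eq_and_sq_eq (ω := ω) (d := -17) (by simpa using hω)
  have hsplit (P : Ideal (𝓞 K)) [P.IsPrime] (hpP : (p : 𝓞 K) ∈ P)
      (hns : ¬ IsSquare (p : ZMod 17)) : Ideal.absNorm P = p ↔ p % 4 = 3 :=
    absNorm_eq_iff_mod_four_eq_three hp hodd (q := 17) (by norm_num) rfl hns hθ hK hpP
  rw [mod_seventeen_mem_iff]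
  constructor
  · rintro ⟨P, hP0, hP, hpP, hord⟩
    have hne : P ≠ Ideal.span {(p : 𝓞 K)} := fun h ↦ by
      simp [(ClassGroup.mk0_eq_one_iff hP0).2 ⟨_, h⟩] at hord
    have hN := (absNorm_eq_or_eq_span hθ (not_isSquare_of_mod_four (Or.inr rfl)) hK hp
      hpP).resolve_right hne
    have hns := (orderOf_mk0_eq_four_iff hθ hK (P := ⟨P, hP0⟩) hp h17 hN).1 hord
    exact ⟨(hsplit P hpP hns).1 hN, hns⟩
  · rintro ⟨h4, hns⟩
    obtain ⟨P, hP, hpP⟩ := exists_isPrime_natCast_mem (S := 𝓞 K) hp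
    have hN := (hsplit P hpP hns).2 h4
    have hP0 : P ∈ (Ideal (𝓞 K))⁰ :=
      Ideal.absNorm_ne_zero_iff_mem_nonZeroDivisors.1 (hN ▸ hp.ne_zero)
    exact ⟨P, hP0, hP, hpP, (orderOf_mk0_eq_four_iff hθ hK (P := ⟨P, hP0⟩) hp h17 hN).2 hns⟩
end
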